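/- Let m ≥ 0 be an integer and let μ be a positive measure on Π⁺×Π⁺. The following are equivalent: (1) there exists C > 0 such that ∫_{Π⁺×Π⁺} |(□^m F)(z₁, z₂, 0)|² dμ(z₁,z₂) ≤ C ‖F‖²_{H²(T_Σ)} for every F ∈ H²(T_Σ); (2) there exists C' > 0 such that ∫_{Π⁺×Π⁺} |G|² dμ ≤ C' ‖G‖²_{A²_{(2m−1/2,2m−1/2)}(Π⁺×Π⁺)} for every G ∈ A²_{(2m−1/2,2m−1/2)}(Π⁺×Π⁺). -/

import Mathlib

open MeasureTheory Set
open scoped ENNReal NNReal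

noncomputable section

/-- The spherical cone `Σ = {y ∈ ℝ³ : y₁y₂ − y₃² > 0, y₁ > 0}`. -/
def Sigma3 : Set (Fin 3 → ℝ) :=
  {y | 0 < y 0 * y 1 - (y 2) ^ 2 ∧ 0 < y 0}

/-- The tube domain `T_Σ = ℝ³ + iΣ ⊂ ℂ³`. -/
def TSigma : Set (Fin 3 → ℂ) :=
  {z | (fun i => (z i).im) ∈ Sigma3}

/-- Square of the Hardy space `H²(T_Σ)` norm. -/
def hardyNormSqSigma (F : (Fin 3 → ℂ) → ℂ) : ℝ≥0∞ :=
  ⨆ y ∈ Sigma3,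
    ∫⁻ x : Fin 3 → ℝ, (‖F (fun i => (x i : ℂ) + (y i : ℂ) * Complex.I)‖₊ : ℝ≥0∞) ^ 2

/-- Partial derivative in the `i`-th complex coordinate. -/
def pd (i : Fin 3) (F : (Fin 3 → ℂ) → ℂ) : (Fin 3 → ℂ) → ℂ :=
  fun z => fderiv ℂ F z (Pi.single i 1)

/-- The box operator `□ = −4 ∂²/∂z₁∂z₂ + ∂²/∂z₃²` associated to the spherical cone. -/
def BoxS (F : (Fin 3 → ℂ) → ℂ) : (Fin 3 → ℂ) → ℂ :=
  fun z => -4 * pd 0 (pd 1 F) z + pd 2 (pd 2 F) z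

/-- The upper half-plane `Π⁺`. -/
def UHP : Set ℂ := {z : ℂ | 0 < z.im}

/-- The weighted measure `dV_α(x+iy) = y^α dx dy` on the upper half-plane. -/
def Vm (α : ℝ) : Measure ℂ :=
  (volume.restrict UHP).withDensity fun z => ENNReal.ofReal (z.im ^ α)

/-- Square of the weighted Bergman space `A²_{(α₁,α₂)}(Π⁺×Π⁺)` norm:
`‖G‖² = ∫_{Π⁺×Π⁺} |G(x₁+iy₁,x₂+iy₂)|² y₁^{α₁} y₂^{α₂} dx₁dx₂dy₁dy₂`. -/
def bergNormSqProd (α₁ α₂ : ℝ) (G : ℂ × ℂ → ℂ) : ℝ≥0∞ :=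
  ∫⁻ z, (‖G z‖₊ : ℝ≥0∞) ^ 2 ∂((Vm α₁).prod (Vm α₂))

section PartA

open MeasureTheory Set
open scoped ENNReal NNReal


open scoped FourierTransform SchwartzMap in
theorem plancherel_aux {E : Type*} [NormedAddCommGroup E] [MeasurableSpace E] [BorelSpace E]
    [InnerProductSpace ℝ E] [FiniteDimensional ℝ E] (h : E → ℂ) (h1 : Integrable h)
    (h2 : MemLp h 2) : ∫⁻ x, (‖𝓕 h x‖₊ : ℝ≥0∞) ^ 2 = ∫⁻ x, (‖h x‖₊ : ℝ≥0∞) ^ 2 := by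
  set u : Lp (α := E) ℂ 2 volume := h2.toLp h with hu
  have hloc : LocallyIntegrable (𝓕 h) := by
    apply Continuous.locallyIntegrable
    exact VectorFourier.fourierIntegral_continuous Real.continuous_fourierChar continuous_inner h1
  have key : ∀ᵐ x : E, (𝓕 u : Lp (α := E) ℂ 2 volume) x = 𝓕 h x := by
    apply ae_eq_of_integral_contDiff_smul_eq
    · exact (Lp.memLp (𝓕 u : Lp (α := E) ℂ 2 volume)).locallyIntegrable (by norm_num)
    · exact hloc
    intro g gs gc
    have gc' : HasCompactSupport (fun x => (g x : ℂ)) := gc.comp_left (g := fun r : ℝ => (r:ℂ)) (by simp)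
    have gs' : ContDiff ℝ (⊤ : ℕ∞) (fun x => (g x : ℂ)) := Complex.ofRealCLM.contDiff.comp gs
    set φ : 𝓢(E, ℂ) := gc'.toSchwartzMap gs' with hφ
    have e1 : ∫ x, g x • (𝓕 u : Lp (α := E) ℂ 2 volume) x = ((𝓕 u : Lp (α := E) ℂ 2 volume) : 𝓢'(E, ℂ)) φ := by
      rw [Lp.toTemperedDistribution_apply]
      rfl
    rw [e1, ← Lp.fourier_toTemperedDistribution_eq, TemperedDistribution.fourier_apply,
      Lp.toTemperedDistribution_apply]
    have e2 : ∫ x, (𝓕 φ) x • u x = ∫ x, (𝓕 φ) x • h x := by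
      apply integral_congr_ae
      filter_upwards [h2.coeFn_toLp] with x hx
      rw [hu, hx]
    rw [e2]
    have := VectorFourier.integral_fourierIntegral_smul_eq_flip (L := innerₗ E) (μ := volume) (ν := volume)
      Real.continuous_fourierChar continuous_inner φ.integrable h1
    have hfl : (innerₗ E).flip = innerₗ E := by ext; simp
    rw [hfl] at this
    exact this
  have e3 : ∫⁻ x, (‖𝓕 h x‖₊ : ℝ≥0∞) ^ 2 = ∫⁻ x, (‖(𝓕 u : Lp (α := E) ℂ 2 volume) x‖₊ : ℝ≥0∞) ^ 2 := by
    apply lintegral_congr_ae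
    filter_upwards [key] with x hx
    rw [hx]
  have e4 : ∫⁻ x, (‖h x‖₊ : ℝ≥0∞) ^ 2 = ∫⁻ x, (‖u x‖₊ : ℝ≥0∞) ^ 2 := by
    apply lintegral_congr_ae
    filter_upwards [h2.coeFn_toLp] with x hx
    rw [hu, hx]
  have e5 : ∀ v : Lp (α := E) ℂ 2 volume, ∫⁻ x, (‖v x‖₊ : ℝ≥0∞) ^ 2 = (‖v‖ₑ) ^ 2 := by
    intro v
    rw [Lp.enorm_def, eLpNorm_eq_lintegral_rpow_enorm_toReal (by norm_num) (by norm_num)]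
    simp only [ENNReal.toReal_ofNat, ENNReal.rpow_ofNat]
    rw [← ENNReal.rpow_natCast, ← ENNReal.rpow_mul]
    norm_num
    rfl
  rw [e3, e4, e5, e5]
  congr 1
  rw [← ofReal_norm, ← ofReal_norm, Lp.norm_fourier_eq]

variable {ι : Type*} [Fintype ι]

/-- bilinear pairing of a complex vector and a real vector -/
def dotc (z : ι → ℂ) (t : ι → ℝ) : ℂ := ∑ i, z i * (t i : ℂ)

/-- Fourier-Laplace transform -/
def FLT (f : (ι → ℝ) → ℂ) (z : ι → ℂ) : ℂ :=
  ∫ t, Complex.exp (2 * Real.pi * Complex.I * dotc z t) * f t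

open scoped FourierTransform in
theorem fourier_toLp (h : (ι → ℝ) → ℂ) (x : ι → ℝ) :
    𝓕 (fun v : EuclideanSpace ℝ ι => h v.ofLp) (WithLp.toLp 2 x) = FLT h (fun i => -(x i : ℂ)) := by
  rw [Real.fourier_eq', FLT, ← (PiLp.volume_preserving_toLp ι).integral_comp
    (MeasurableEquiv.toLp 2 (ι → ℝ)).measurableEmbedding]
  congr 1
  ext t
  simp only [smul_eq_mul]
  congr 2
  simp [dotc, PiLp.inner_apply, Finset.sum_neg_distrib, Finset.mul_sum, Finset.sum_mul]
  refine Finset.sum_congr rfl fun i _ => ?_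
  ring

open scoped FourierTransform in
theorem fourierInv_toLp (h : (ι → ℝ) → ℂ) (x : ι → ℝ) :
    𝓕⁻ (fun v : EuclideanSpace ℝ ι => h v.ofLp) (WithLp.toLp 2 x) = FLT h (fun i => (x i : ℂ)) := by
  rw [Real.fourierInv_eq', FLT, ← (PiLp.volume_preserving_toLp ι).integral_comp
    (MeasurableEquiv.toLp 2 (ι → ℝ)).measurableEmbedding]
  congr 1
  ext t
  simp only [smul_eq_mul]
  congr 2
  simp [dotc, PiLp.inner_apply, Finset.mul_sum, Finset.sum_mul]
  refine Finset.sum_congr rfl fun i _ => ?_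
  ring

theorem toLp_integrable {h : (ι → ℝ) → ℂ} (h1 : Integrable h) :
    Integrable (fun v : EuclideanSpace ℝ ι => h v.ofLp) :=
  ((PiLp.volume_preserving_ofLp ι).integrable_comp_emb
    (MeasurableEquiv.toLp 2 (ι → ℝ)).symm.measurableEmbedding).2 h1

theorem plancherel_neg (h : (ι → ℝ) → ℂ) (h1 : Integrable h) :
    ∫⁻ x : ι → ℝ, (‖FLT h (fun i => -(x i : ℂ))‖₊ : ℝ≥0∞) ^ 2 ≤ ∫⁻ x, (‖h x‖₊ : ℝ≥0∞) ^ 2 := by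
  by_cases hf : ∫⁻ x, (‖h x‖₊ : ℝ≥0∞) ^ 2 = ⊤
  · rw [hf]; exact le_top
  have h2 : MemLp h 2 := by
    refine ⟨h1.1, ?_⟩
    rw [eLpNorm_eq_lintegral_rpow_enorm_toReal (by norm_num) (by norm_num)]
    refine ENNReal.rpow_lt_top_of_nonneg (by norm_num) ?_
    simpa using! hf
  have h2' : MemLp (fun v : EuclideanSpace ℝ ι => h v.ofLp) 2 :=
    h2.comp_measurePreserving (PiLp.volume_preserving_ofLp ι)
  have := plancherel_aux _ (toLp_integrable h1) h2'
  rw [← (PiLp.volume_preserving_toLp ι).lintegral_comp_emb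
    (MeasurableEquiv.toLp 2 (ι → ℝ)).measurableEmbedding, 
    ← (PiLp.volume_preserving_toLp ι).lintegral_comp_emb
    (MeasurableEquiv.toLp 2 (ι → ℝ)).measurableEmbedding] at this
  simp only [fourier_toLp] at this
  exact this.le

theorem plancherel_pos (h : (ι → ℝ) → ℂ) (h1 : Integrable h) :
    ∫⁻ x : ι → ℝ, (‖FLT h (fun i => (x i : ℂ))‖₊ : ℝ≥0∞) ^ 2 ≤ ∫⁻ x, (‖h x‖₊ : ℝ≥0∞) ^ 2 := by
  refine le_trans (le_of_eq ?_) (plancherel_neg h h1)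
  rw [← lintegral_neg_eq_self]
  simp

open scoped FourierTransform in
theorem FLT_inversion (h : (ι → ℝ) → ℂ) (hc : Continuous h) (h1 : Integrable h)
    (h2 : Integrable (fun t : ι → ℝ => FLT h (fun i => -(t i : ℂ)))) (x : ι → ℝ) :
    h x = FLT (fun t : ι → ℝ => FLT h (fun i => -(t i : ℂ))) (fun i => (x i : ℂ)) := by
  rw [← fourierInv_toLp]
  have hh : 𝓕 (fun v : EuclideanSpace ℝ ι => h v.ofLp) =
      fun v : EuclideanSpace ℝ ι => FLT h (fun i => -(v.ofLp i : ℂ)) :=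
    funext fun v => fourier_toLp h v.ofLp
  have := Continuous.fourierInv_fourier_eq (f := fun v : EuclideanSpace ℝ ι => h v.ofLp)
    (by fun_prop) (toLp_integrable h1) (by rw [hh]; exact toLp_integrable h2)
  have h3 := congrFun this (WithLp.toLp 2 x)
  rw [hh] at h3
  exact h3.symm

end PartA

section PartB

open MeasureTheory Set
open scoped ENNReal NNReal

set_option linter.unusedSectionVars false
variable {ι : Type*} [Fintype ι]

/-- `x + i y` -/
def cx (x y : ι → ℝ) : ι → ℂ := fun i => (x i : ℂ) + (y i : ℂ) * Complex.I

/-- real dot product -/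
def rdot (y t : ι → ℝ) : ℝ := ∑ i, y i * t i

/-- tube domain -/
def tube (Ω : Set (ι → ℝ)) : Set (ι → ℂ) := {z | (fun i => (z i).im) ∈ Ω}

/-- the exponential weight -/
def wt (y t : ι → ℝ) : ℝ := Real.exp (-(2 * Real.pi * rdot y t))

theorem wt_pos (y t : ι → ℝ) : 0 < wt y t := Real.exp_pos _

@[fun_prop] theorem continuous_rdot {X : Type*} [TopologicalSpace X] {a b : X → ι → ℝ}
    (ha : Continuous a) (hb : Continuous b) : Continuous fun x => rdot (a x) (b x) := by
  unfold rdot; fun_prop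

@[fun_prop] theorem continuous_wt {X : Type*} [TopologicalSpace X] {a b : X → ι → ℝ}
    (ha : Continuous a) (hb : Continuous b) : Continuous fun x => wt (a x) (b x) := by
  unfold wt; fun_prop

@[fun_prop] theorem continuous_cx {X : Type*} [TopologicalSpace X] {a b : X → ι → ℝ}
    (ha : Continuous a) (hb : Continuous b) : Continuous fun x => cx (a x) (b x) := by
  unfold cx; fun_prop

@[fun_prop] theorem continuous_dotc {X : Type*} [TopologicalSpace X] {a : X → ι → ℂ} {b : X → ι → ℝ}
    (ha : Continuous a) (hb : Continuous b) : Continuous fun x => dotc (a x) (b x) := by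
  unfold dotc; fun_prop

theorem rdot_add_left (a b t : ι → ℝ) : rdot (a + b) t = rdot a t + rdot b t := by
  simp [rdot, add_mul, Finset.sum_add_distrib]

theorem rdot_smul_left (c : ℝ) (a t : ι → ℝ) : rdot (c • a) t = c * rdot a t := by
  simp [rdot, Finset.mul_sum, mul_assoc]

theorem cx_mem {Ω : Set (ι → ℝ)} {x y : ι → ℝ} : cx x y ∈ tube Ω ↔ y ∈ Ω := by
  simp [tube, cx]

theorem cx_re_im (z : ι → ℂ) : cx (fun i => (z i).re) (fun i => (z i).im) = z := by
  ext i; simp [cx, Complex.re_add_im]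

theorem isOpen_tube {Ω : Set (ι → ℝ)} (hΩ : IsOpen Ω) : IsOpen (tube Ω) := by
  apply hΩ.preimage
  fun_prop

theorem norm_exp_dotc (z : ι → ℂ) (t : ι → ℝ) :
    ‖Complex.exp (2 * Real.pi * Complex.I * dotc z t)‖ = wt (fun i => (z i).im) t := by
  rw [Complex.norm_exp, wt]
  congr 1
  have : (dotc z t).im = rdot (fun i => (z i).im) t := by
    simp [dotc, rdot]
  simp [this]

theorem exp_dotc_cx (x y t : ι → ℝ) :
    Complex.exp (2 * Real.pi * Complex.I * dotc (cx x y) t) =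
      Complex.exp (2 * Real.pi * Complex.I * dotc (fun i => (x i : ℂ)) t) * (wt y t : ℂ) := by
  rw [wt, Complex.ofReal_exp, ← Complex.exp_add]
  congr 1
  have : dotc (cx x y) t = dotc (fun i => (x i : ℂ)) t + Complex.I * (rdot y t : ℂ) := by
    simp [dotc, rdot, cx, Finset.mul_sum, add_mul, Finset.sum_add_distrib]
    refine Finset.sum_congr rfl fun i _ => ?_
    ring
  rw [this]
  push_cast
  linear_combination (2 * Real.pi * rdot y t : ℂ) * Complex.I_mul_I

theorem FLT_cx (f : (ι → ℝ) → ℂ) (x y : ι → ℝ) :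
    FLT f (cx x y) = FLT (fun t => (wt y t : ℂ) * f t) (fun i => (x i : ℂ)) := by
  unfold FLT
  congr 1
  ext t
  rw [exp_dotc_cx, mul_assoc]

theorem slice_continuous {Ω : Set (ι → ℝ)} {F : (ι → ℂ) → ℂ}
    (hF : ContinuousOn F (tube Ω)) {y : ι → ℝ} (hy : y ∈ Ω) : Continuous fun x => F (cx x y) :=
  hF.comp_continuous (by fun_prop) fun _ => cx_mem.2 hy

theorem shift_int {Ω : Set (ι → ℝ)} {H : (ι → ℂ) → ℂ} (hH : ContinuousOn H (tube Ω))
    {y v : ι → ℝ} (hseg : ∀ s ∈ Icc (0:ℝ) 1, y + s • v ∈ Ω) {C : ℝ≥0∞} (hC : C < ⊤)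
    (hb : ∀ s ∈ Icc (0:ℝ) 1, ∫⁻ x, (‖H (cx x (y + s • v))‖₊ : ℝ≥0∞) ≤ C)
    {α β : ℝ → ℝ} (hα : Continuous α) (hβ : Continuous β) (hβ' : ∀ a ∈ Icc (0:ℝ) 1, β a ∈ Icc (0:ℝ) 1) :
    Integrable (fun p : (ι → ℝ) × ℝ => H (cx (p.1 + α p.2 • v) (y + β p.2 • v)))
      (volume.prod (volume.restrict (Ioc 0 1))) := by
  have hmeas : AEStronglyMeasurable (fun p : (ι → ℝ) × ℝ => H (cx (p.1 + α p.2 • v) (y + β p.2 • v)))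
      (volume.prod (volume.restrict (Ioc 0 1))) := by
    have : (volume : Measure (ι → ℝ)).prod (volume.restrict (Ioc (0:ℝ) 1)) =
        (volume.prod volume).restrict (univ ×ˢ Ioc (0:ℝ) 1) := by
      rw [← Measure.prod_restrict, Measure.restrict_univ]
    rw [this]
    apply ContinuousOn.aestronglyMeasurable _ (MeasurableSet.univ.prod measurableSet_Ioc)
    apply hH.comp (by fun_prop)
    intro p hp
    exact cx_mem.2 (hseg _ (hβ' _ (Ioc_subset_Icc_self hp.2)))
  refine ⟨hmeas, ?_⟩
  rw [HasFiniteIntegral]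
  rw [lintegral_prod_symm _ hmeas.enorm]
  calc _ ≤ ∫⁻ a in Ioc (0:ℝ) 1, C := by
        apply setLIntegral_mono' measurableSet_Ioc
        intro a ha
        have h1 := hb _ (hβ' _ (Ioc_subset_Icc_self ha))
        refine le_trans (le_of_eq ?_) h1
        exact lintegral_add_right_eq_self (μ := volume) (fun x => (‖H (cx x (y + β a • v))‖ₑ)) (α a • v)
    _ < ⊤ := by
        simp [hC]

theorem int_comb {X : Type*} [MeasurableSpace X] {μ : Measure X} {b1 b2 b3 b4 : X → ℂ}
    (h1 : Integrable b1 μ) (h2 : Integrable b2 μ) (h3 : Integrable b3 μ) (h4 : Integrable b4 μ)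
    (h : ∀ x, b1 x - b2 x + Complex.I * b3 x - Complex.I * b4 x = 0) :
    ∫ x, b1 x ∂μ - ∫ x, b2 x ∂μ + Complex.I * ∫ x, b3 x ∂μ - Complex.I * ∫ x, b4 x ∂μ = 0 := by
  have h3' := h3.const_mul Complex.I
  have h4' := h4.const_mul Complex.I
  have h12 : Integrable (fun x => b1 x - b2 x) μ := h1.sub h2
  have h123 : Integrable (fun x => b1 x - b2 x + Complex.I * b3 x) μ := h12.add h3'
  rw [← integral_const_mul, ← integral_const_mul, ← integral_sub h1 h2, ← integral_add h12 h3',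
    ← integral_sub h123 h4']
  simp [h]

theorem shift_eq {Ω : Set (ι → ℝ)} {H : (ι → ℂ) → ℂ} (hΩ : IsOpen Ω) (hH : DifferentiableOn ℂ H (tube Ω))
    {y v : ι → ℝ} (hseg : ∀ s ∈ Icc (0:ℝ) 1, y + s • v ∈ Ω) {C : ℝ≥0∞} (hC : C < ⊤)
    (hb : ∀ s ∈ Icc (0:ℝ) 1, ∫⁻ x, (‖H (cx x (y + s • v))‖₊ : ℝ≥0∞) ≤ C) :
    ∫ x, H (cx x y) = ∫ x, H (cx x (y + v)) := by
  have main : ∀ {α β : ℝ → ℝ} (_ : Continuous α) (_ : Continuous β)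
    (_ : ∀ a ∈ Icc (0:ℝ) 1, β a ∈ Icc (0:ℝ) 1),
      Integrable (fun x => ∫ a in (0:ℝ)..1, H (cx (x + α a • v) (y + β a • v))) ∧ 
      ∫ x, (∫ a in (0:ℝ)..1, H (cx (x + α a • v) (y + β a • v))) =
        ∫ a in (0:ℝ)..1, ∫ x, H (cx x (y + β a • v)) := by
    intro α β hα hβ hβ'
    have hi := shift_int hH.continuousOn hseg hC hb hα hβ hβ'
    simp only [intervalIntegral.integral_of_le (zero_le_one' ℝ)]
    refine ⟨hi.integral_prod_left, ?_⟩
    rw [integral_integral_swap hi]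
    congr 1
    ext a
    exact integral_add_right_eq_self (μ := volume) (fun x => H (cx x (y + β a • v))) (α a • v)
  have rect : ∀ x : ι → ℝ, (∫ a in (0:ℝ)..1, H (cx (x + a • v) (y + (0:ℝ) • v)))
      - (∫ a in (0:ℝ)..1, H (cx (x + a • v) (y + (1:ℝ) • v)))
      + Complex.I * (∫ a in (0:ℝ)..1, H (cx (x + (1:ℝ) • v) (y + a • v)))
      - Complex.I * (∫ a in (0:ℝ)..1, H (cx (x + (0:ℝ) • v) (y + a • v))) = 0 := by
    intro x
    have hcx : ∀ a s : ℝ, cx (x + a • v) (y + s • v) =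
        fun i => cx x y i + ((a : ℂ) + s * Complex.I) * (v i : ℂ) := by
      intro a s; ext i; simp [cx]; ring
    have := Complex.integral_boundary_rect_eq_zero_of_differentiableOn
      (fun w : ℂ => H (fun i => cx x y i + w * (v i : ℂ))) 0 (1 + Complex.I) ?_
    · simp only [hcx]
      simpa using this
    · apply hH.comp (by fun_prop)
      intro w hw
      have hw2 : w.im ∈ Icc (0:ℝ) 1 := by
        have := hw.2
        simpa using this
      have := hseg _ hw2
      have e : (fun i => (cx x y i + w * (v i : ℂ)).im) = y + w.im • v := by
        ext i
        simp [cx]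
      rw [← e] at this
      exact this
  have h0 : ∀ a ∈ Icc (0:ℝ) 1, (0:ℝ) ∈ Icc (0:ℝ) 1 := by simp
  have h1 : ∀ a ∈ Icc (0:ℝ) 1, (1:ℝ) ∈ Icc (0:ℝ) 1 := by simp
  have b1 := main continuous_id (continuous_const (y := (0:ℝ))) h0
  have b2 := main continuous_id (continuous_const (y := (1:ℝ))) h1
  have b3 := main (continuous_const (y := (1:ℝ))) continuous_id (fun a ha => ha)
  have b4 := main (continuous_const (y := (0:ℝ))) continuous_id (fun a ha => ha)
  simp only [id] at b1 b2 b3 b4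
  have tot := int_comb b1.1 b2.1 b3.1 b4.1 rect
  rw [b1.2, b2.2, b3.2, b4.2] at tot
  simp at tot
  exact sub_eq_zero.1 tot

end PartB

section PartC

open MeasureTheory Set
open scoped ENNReal NNReal

set_option linter.unusedSectionVars false
variable {ι : Type*} [Fintype ι]

theorem integrable_exp_abs {c : ℝ} (hc : 0 < c) : Integrable fun t : ℝ => Real.exp (-(c * |t|)) := by
  rw [← integrableOn_univ, ← Iic_union_Ioi (a := (0:ℝ))]
  refine IntegrableOn.union ?_ ?_
  · refine (integrableOn_exp_mul_Iic hc 0).congr_fun (fun t ht => ?_) measurableSet_Iic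
    simp only
    rw [abs_of_nonpos ht]; ring_nf
  · refine (integrableOn_exp_mul_Ioi (neg_lt_zero.2 hc) 0).congr_fun (fun t ht => ?_) measurableSet_Ioi
    simp only
    rw [abs_of_pos ht]; ring_nf

/-- decaying factor -/
def ebox (δ : ℝ) (t : ι → ℝ) : ℝ := Real.exp (-(2 * Real.pi * δ * ∑ i, |t i|))

@[fun_prop] theorem continuous_ebox (δ : ℝ) : Continuous (ebox (ι := ι) δ) := by
  unfold ebox; fun_prop

theorem ebox_pos (δ : ℝ) (t : ι → ℝ) : 0 < ebox δ t := Real.exp_pos _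

theorem integrable_ebox {δ : ℝ} (hδ : 0 < δ) : Integrable (ebox (ι := ι) δ) := by
  have : ebox (ι := ι) δ = fun t => ∏ i, Real.exp (-(2 * Real.pi * δ * |t i|)) := by
    ext t
    rw [ebox, ← Real.exp_sum, Finset.mul_sum, Finset.sum_neg_distrib]
  rw [this]
  exact Integrable.fintype_prod (f := fun _ s => Real.exp (-(2 * Real.pi * δ * |s|)))
    fun i => integrable_exp_abs (by positivity)

/-- sign vectors -/
def sg (σ : ι → Bool) : ι → ℝ := fun i => if σ i then 1 else -1

theorem wt_add (a b t : ι → ℝ) : wt (a + b) t = wt a t * wt b t := by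
  simp only [wt, ← Real.exp_add, rdot_add_left]
  congr 1; ring

theorem corner [DecidableEq ι] (δ : ℝ) (y t : ι → ℝ) :
    wt y t ≤ ebox δ t * ∑ σ : ι → Bool, wt (y + δ • sg σ) t := by
  have h := Finset.single_le_sum (f := fun σ : ι → Bool => wt (y + δ • sg σ) t)
    (fun _ _ => (wt_pos _ _).le) (Finset.mem_univ (fun i => decide (t i < 0)))
  have h2 : wt (y + δ • sg (fun i => decide (t i < 0))) t * ebox δ t = wt y t := by
    rw [wt_add, wt, wt, ebox, ← Real.exp_add, ← Real.exp_add]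
    congr 1
    rw [rdot_smul_left]
    have : rdot (sg (fun i => decide (t i < 0))) t = - ∑ i, |t i| := by
      rw [rdot, ← Finset.sum_neg_distrib]
      refine Finset.sum_congr rfl fun i _ => ?_
      by_cases hi : t i < 0
      · simp [sg, hi, abs_of_neg hi]
      · simp [sg, hi, abs_of_nonneg (not_lt.1 hi)]
    rw [this]; ring
  rw [← h2, mul_comm]
  exact mul_le_mul_of_nonneg_left h (Real.exp_pos _).le

theorem sg_mem {Ω : Set (ι → ℝ)} (hΩ : IsOpen Ω) {y : ι → ℝ} (hy : y ∈ Ω) :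
    ∃ δ : ℝ, 0 < δ ∧ ∀ σ : ι → Bool, y + δ • sg σ ∈ Ω := by
  obtain ⟨ε, hε, h⟩ := Metric.isOpen_iff.1 hΩ y hy
  refine ⟨ε / 2, by positivity, fun σ => h ?_⟩
  rw [mem_ball_iff_norm]
  rw [add_sub_cancel_left, norm_smul]
  have : ‖sg σ‖ ≤ 1 := by
    rw [pi_norm_le_iff_of_nonneg zero_le_one]
    intro i
    by_cases hi : σ i <;> simp [sg, hi]
  rw [Real.norm_of_nonneg (by positivity)]
  nlinarith

/-- L1 bound in terms of weighted L2 norms at the corners -/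
theorem corner_L2 [DecidableEq ι] {δ : ℝ} (hδ : 0 < δ) : ∃ K : ℝ≥0∞, K < ⊤ ∧ ∀ (y : ι → ℝ) (h : (ι → ℝ) → ℂ),
    AEStronglyMeasurable h volume →
    ∫⁻ t, ENNReal.ofReal (wt y t) * ‖h t‖ₑ ≤
      K * ∑ σ : ι → Bool, (∫⁻ t, (ENNReal.ofReal (wt (y + δ • sg σ) t) * ‖h t‖ₑ) ^ 2) ^ (1 / 2 : ℝ) := by
  refine ⟨(∫⁻ t : ι → ℝ, (ENNReal.ofReal (ebox δ t)) ^ (2:ℝ)) ^ (1 / 2 : ℝ), ?_, fun y h hm => ?_⟩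
  · refine ENNReal.rpow_lt_top_of_nonneg (by norm_num) ?_
    have h2 := (integrable_ebox (ι := ι) (δ := δ * 2) (by positivity)).lintegral_lt_top.ne
    convert h2 using 3 with t
    rw [ENNReal.ofReal_rpow_of_pos (ebox_pos _ _), ebox, ebox, ← Real.exp_mul]
    congr 2; ring
  · calc _ ≤ ∫⁻ t, ∑ σ : ι → Bool, ENNReal.ofReal (ebox δ t) *
          (ENNReal.ofReal (wt (y + δ • sg σ) t) * ‖h t‖ₑ) := by
          apply lintegral_mono
          intro t
          simp only
          rw [← Finset.mul_sum, ← Finset.sum_mul, ← mul_assoc]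
          gcongr
          rw [← ENNReal.ofReal_sum_of_nonneg (fun _ _ => (wt_pos _ _).le),
            ← ENNReal.ofReal_mul (ebox_pos _ _).le]
          exact ENNReal.ofReal_le_ofReal (corner δ y t)
      _ = ∑ σ : ι → Bool, ∫⁻ t, ENNReal.ofReal (ebox δ t) *
          (ENNReal.ofReal (wt (y + δ • sg σ) t) * ‖h t‖ₑ) := by
          apply lintegral_finsetSum'
          intro σ _
          have := hm.enorm
          have h1 : Continuous fun t => wt (y + δ • sg σ) t := by fun_prop
          have h2 : Continuous fun t => ebox δ t := continuous_ebox (ι := ι) δ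
          exact h2.measurable.ennreal_ofReal.aemeasurable.mul
            (h1.measurable.ennreal_ofReal.aemeasurable.mul hm.enorm)
      _ ≤ _ := by
          rw [Finset.mul_sum]
          refine Finset.sum_le_sum fun σ _ => ?_
          have h1 : Continuous fun t => wt (y + δ • sg σ) t := by fun_prop
          have h2 : Continuous fun t => ebox δ t := continuous_ebox (ι := ι) δ
          have := ENNReal.lintegral_mul_le_Lp_mul_Lq (volume : Measure (ι → ℝ)) Real.HolderConjugate.two_two
            (f := fun t => ENNReal.ofReal (ebox δ t))
            (g := fun t => ENNReal.ofReal (wt (y + δ • sg σ) t) * ‖h t‖ₑ)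
            h2.measurable.ennreal_ofReal.aemeasurable
            (h1.measurable.ennreal_ofReal.aemeasurable.mul hm.enorm)
          simpa using this

theorem integrable_of_lintegral {f : (ι → ℝ) → ℂ} (hf : AEStronglyMeasurable f volume) {y : ι → ℝ} 
    (h : ∫⁻ t, ENNReal.ofReal (wt y t) * ‖f t‖ₑ < ⊤) : Integrable fun t => (wt y t : ℂ) * f t := by
  have h1 : Continuous fun t => (wt y t : ℂ) := by fun_prop
  refine ⟨h1.aestronglyMeasurable.mul hf, ?_⟩
  rw [HasFiniteIntegral]
  refine lt_of_le_of_lt (le_of_eq ?_) h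
  congr 1; ext t
  rw [enorm_mul]
  congr 1
  rw [← ofReal_norm, Complex.norm_of_nonneg (wt_pos _ _).le]

theorem integrable_of_L2 {Ω : Set (ι → ℝ)} (hΩ : IsOpen Ω) {f : (ι → ℝ) → ℂ}
    (hf : AEStronglyMeasurable f volume)
    (h : ∀ y ∈ Ω, ∫⁻ t, (ENNReal.ofReal (wt y t) * ‖f t‖ₑ) ^ 2 < ⊤) {y : ι → ℝ} (hy : y ∈ Ω) :
    Integrable fun t => (wt y t : ℂ) * f t := by
  classical
  obtain ⟨δ, hδ, hδ'⟩ := sg_mem hΩ hy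
  obtain ⟨K, hK, hK'⟩ := corner_L2 (ι := ι) hδ
  refine integrable_of_lintegral hf ((hK' y f hf).trans_lt ?_)
  refine ENNReal.mul_lt_top hK (ENNReal.sum_lt_top.2 fun σ _ => ?_)
  exact ENNReal.rpow_lt_top_of_nonneg (by norm_num) (h _ (hδ' σ)).ne

theorem FLT_measurable {h : (ι → ℝ) → ℂ} (hh : Continuous h) :
    Measurable fun t : ι → ℝ => FLT h (fun i => -(t i : ℂ)) := by
  have : StronglyMeasurable (Function.uncurry fun (t x : ι → ℝ) =>
      Complex.exp (2 * Real.pi * Complex.I * dotc (fun i => -(t i : ℂ)) x) * h x) := by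
    apply Continuous.stronglyMeasurable
    fun_prop
  exact this.integral_prod_right.measurable

theorem norm_FLT_neg_le {h : (ι → ℝ) → ℂ} (t : ι → ℝ) :
    ‖FLT h (fun i => -(t i : ℂ))‖ ≤ ∫ x, ‖h x‖ := by
  refine (norm_integral_le_integral_norm _).trans (le_of_eq ?_)
  congr 1; ext x
  rw [norm_mul, norm_exp_dotc]
  simp [wt, rdot]

theorem PW1 {Ω : Set (ι → ℝ)} (hΩ : IsOpen Ω) (hc : Convex ℝ Ω) (hne : Ω.Nonempty)
    {F : (ι → ℂ) → ℂ} (hF : DifferentiableOn ℂ F (tube Ω))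
    (hb : ∀ y ∈ Ω, ∀ v, y + v ∈ Ω → ∃ C < (⊤ : ℝ≥0∞), ∀ s ∈ Icc (0:ℝ) 1,
      ∫⁻ x, (‖F (cx x (y + s • v))‖₊ : ℝ≥0∞) ≤ C) :
    ∃ f : (ι → ℝ) → ℂ, Measurable f ∧
      (∀ y ∈ Ω, ∀ t, (wt y t : ℂ) * f t = FLT (fun x => F (cx x y)) (fun i => -(t i : ℂ))) ∧
      (∀ y ∈ Ω, Integrable fun t => (wt y t : ℂ) * f t) ∧ 
      ∀ z ∈ tube Ω, F z = FLT f z := by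
  classical
  obtain ⟨y0, hy0⟩ := hne
  have hseg : ∀ y ∈ Ω, ∀ v, y + v ∈ Ω → ∀ s ∈ Icc (0:ℝ) 1, y + s • v ∈ Ω := by
    intro y hy v hv s hs
    have := hc.add_smul_sub_mem hy hv hs
    simpa using this
  have hInteg : ∀ y ∈ Ω, Integrable fun x => F (cx x y) := by
    intro y hy
    obtain ⟨C, hC, h⟩ := hb y hy 0 (by simpa)
    refine ⟨(slice_continuous hF.continuousOn hy).aestronglyMeasurable, ?_⟩
    have := h 0 (by simp)
    simp only [smul_zero, add_zero] at this
    exact this.trans_lt hC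
  set f : (ι → ℝ) → ℂ := fun t => ((wt y0 t)⁻¹ : ℂ) * FLT (fun x => F (cx x y0)) (fun i => -(t i : ℂ)) with hf
  have hfm : Measurable f := by
    apply Measurable.mul
    · have h1 : Continuous fun t => wt y0 t := by fun_prop
      exact (Complex.measurable_ofReal.comp h1.measurable).inv
    · exact FLT_measurable (slice_continuous hF.continuousOn hy0)
  have e1 : ∀ y ∈ Ω, ∀ t, ∫ x, Complex.exp (2 * Real.pi * Complex.I * dotc (fun i => - cx x y i) t) * F (cx x y)
      = ((wt y t)⁻¹ : ℂ) * FLT (fun x => F (cx x y)) (fun i => -(t i : ℂ)) := by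
    intro y hy t
    rw [FLT, ← integral_const_mul]
    congr 1; ext x
    have : (fun i => - cx x y i) = cx (-x) (-y) := by ext i; simp [cx]; ring
    rw [this, exp_dotc_cx]
    have h2 : dotc (fun i => (((-x) i : ℝ) : ℂ)) t = dotc (fun i => -(t i : ℂ)) x := by
      simp [dotc, mul_comm]
    have h3 : (wt (-y) t : ℂ) = (wt y t : ℂ)⁻¹ := by
      rw [← Complex.ofReal_inv]
      congr 1
      rw [wt, wt, ← Real.exp_neg]
      simp [rdot]
    rw [h2, h3]; ring
  have e2 : ∀ y ∈ Ω, ∀ t, (wt y t : ℂ) * f t = FLT (fun x => F (cx x y)) (fun i => -(t i : ℂ)) := by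
    intro y hy t
    have hw : (wt y t : ℂ) ≠ 0 := by exact_mod_cast (wt_pos y t).ne'
    suffices hs : f t = ((wt y t)⁻¹ : ℂ) * FLT (fun x => F (cx x y)) (fun i => -(t i : ℂ)) by
      rw [hs, ← mul_assoc, mul_inv_cancel₀ hw, one_mul]
    rw [hf]
    simp only
    rw [← e1 y0 hy0, ← e1 y hy]
    obtain ⟨C, hC, hC'⟩ := hb y0 hy0 (y - y0) (by simpa)
    have := shift_eq (H := fun z => Complex.exp (2 * Real.pi * Complex.I * dotc (fun i => - z i) t) * F z)
      hΩ ?_ (hseg y0 hy0 (y - y0) (by simpa))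
      (C := ENNReal.ofReal (Real.exp (2 * Real.pi * (|rdot y0 t| + |rdot (y - y0) t|))) * C)
      (ENNReal.mul_lt_top ENNReal.ofReal_lt_top hC) ?_
    · simpa using this
    · apply DifferentiableOn.mul _ hF
      unfold dotc
      fun_prop
    · intro s hs
      refine le_trans ?_ (mul_le_mul_right (hC' s hs) _)
      rw [← lintegral_const_mul']
      swap; · exact ENNReal.ofReal_ne_top
      apply lintegral_mono
      intro x
      simp only [nnnorm_mul, ENNReal.coe_mul]
      gcongr
      rw [← enorm_eq_nnnorm, ← ofReal_norm]
      apply ENNReal.ofReal_le_ofReal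
      rw [norm_exp_dotc, wt]
      apply Real.exp_le_exp.2
      have h1 : rdot (fun i => (-cx x (y0 + s • (y - y0)) i).im) t = -(rdot y0 t + s * rdot (y - y0) t) := by
        rw [← rdot_smul_left, ← rdot_add_left]
        simp [rdot, cx]
        rw [← Finset.sum_neg_distrib]
        refine Finset.sum_congr rfl fun i _ => ?_
        ring
      rw [h1]
      have h2 : s * rdot (y - y0) t ≤ |rdot (y - y0) t| := by
        calc _ ≤ |s * rdot (y - y0) t| := le_abs_self _
          _ = s * |rdot (y - y0) t| := by rw [abs_mul, abs_of_nonneg hs.1]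
          _ ≤ 1 * |rdot (y - y0) t| := by gcongr; exact hs.2
          _ = _ := one_mul _
      have h3 := le_abs_self (rdot y0 t)
      have h4 := Real.pi_pos
      nlinarith
  have e3 : ∀ y ∈ Ω, Integrable fun t => (wt y t : ℂ) * f t := by
    intro y hy
    obtain ⟨δ, hδ, hδ'⟩ := sg_mem hΩ hy
    have hw : Continuous fun t => wt y t := by fun_prop
    refine ((integrable_ebox hδ).const_mul (∑ σ : ι → Bool, ∫ x, ‖F (cx x (y + δ • sg σ))‖)).mono'
      (((Complex.measurable_ofReal.comp hw.measurable).mul hfm).aestronglyMeasurable) ?_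
    refine Filter.Eventually.of_forall fun t => ?_
    rw [norm_mul, Complex.norm_of_nonneg (wt_pos _ _).le]
    calc _ ≤ (ebox δ t * ∑ σ : ι → Bool, wt (y + δ • sg σ) t) * ‖f t‖ := by
          gcongr; exact corner δ y t
      _ = (∑ σ : ι → Bool, wt (y + δ • sg σ) t * ‖f t‖) * ebox δ t := by
          rw [Finset.sum_mul, Finset.mul_sum, Finset.sum_mul]
          refine Finset.sum_congr rfl fun i _ => ?_
          ring
      _ ≤ _ := by
          gcongr with σ
          · exact (Real.exp_pos _).le
          · have := norm_FLT_neg_le (h := fun x => F (cx x (y + δ • sg σ))) t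
            rw [← e2 _ (hδ' σ), norm_mul, Complex.norm_of_nonneg (wt_pos _ _).le] at this
            exact this
  refine ⟨f, hfm, e2, e3, ?_⟩
  intro z hz
  obtain ⟨x, y, rfl⟩ : ∃ x y, z = cx x y := ⟨_, _, (cx_re_im z).symm⟩
  have hy := cx_mem.1 hz
  have hi := e3 y hy
  have heq : (fun t => (wt y t : ℂ) * f t) = fun t : ι → ℝ => FLT (fun x => F (cx x y)) (fun i => -(t i : ℂ)) :=
    funext (e2 y hy)
  rw [FLT_cx, heq]
  rw [heq] at hi
  exact FLT_inversion _ (slice_continuous hF.continuousOn hy) (hInteg y hy) hi x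

end PartC

section PartD

open MeasureTheory Set Filter
open scoped ENNReal NNReal Topology

set_option linter.unusedSectionVars false
variable {ι : Type*} [Fintype ι]

theorem integrable_exp_dotc {f : (ι → ℝ) → ℂ} (hf : AEStronglyMeasurable f volume) {z : ι → ℂ}
    (h : Integrable fun t => (wt (fun i => (z i).im) t : ℂ) * f t) :
    Integrable fun t => Complex.exp (2 * Real.pi * Complex.I * dotc z t) * f t := by
  have h1 : Continuous fun t => Complex.exp (2 * Real.pi * Complex.I * dotc z t) := by fun_prop
  refine h.mono (h1.aestronglyMeasurable.mul hf) (Eventually.of_forall fun t => ?_)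
  rw [norm_mul, norm_mul, norm_exp_dotc, Complex.norm_of_nonneg (wt_pos _ _).le]

theorem FLT_sub {f g : (ι → ℝ) → ℂ} (hf : AEStronglyMeasurable f volume) (hg : AEStronglyMeasurable g volume) {z : ι → ℂ}
    (h : Integrable fun t => (wt (fun i => (z i).im) t : ℂ) * f t)
    (h' : Integrable fun t => (wt (fun i => (z i).im) t : ℂ) * g t) :
    FLT (fun t => f t - g t) z = FLT f z - FLT g z := by
  unfold FLT
  rw [← integral_sub (integrable_exp_dotc hf h) (integrable_exp_dotc hg h')]
  simp only [mul_sub]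

theorem enorm_FLT_le (f : (ι → ℝ) → ℂ) (z : ι → ℂ) :
    ‖FLT f z‖ₑ ≤ ∫⁻ t, ENNReal.ofReal (wt (fun i => (z i).im) t) * ‖f t‖ₑ := by
  refine (enorm_integral_le_lintegral_enorm _).trans (le_of_eq ?_)
  congr 1; ext t
  rw [enorm_mul, ← ofReal_norm, norm_exp_dotc]

/-- regularized function -/
def gF (F : (ι → ℂ) → ℂ) (ε : ℝ) (z : ι → ℂ) : ℂ := F z * Complex.exp (-(ε * ∑ i, z i ^ 2))

theorem norm_gauss (ε : ℝ) (x y : ι → ℝ) :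
    ‖Complex.exp (-(ε * ∑ i, cx x y i ^ 2))‖ = Real.exp (ε * rdot y y) * Real.exp (-(ε * rdot x x)) := by
  rw [Complex.norm_exp, ← Real.exp_add]
  congr 1
  have : (∑ i, cx x y i ^ 2).re = rdot x x - rdot y y := by
    simp only [rdot, Complex.re_sum, ← Finset.sum_sub_distrib]
    refine Finset.sum_congr rfl fun i _ => ?_
    simp [cx, pow_two]
  rw [Complex.neg_re, Complex.re_ofReal_mul, this]; ring

theorem rdot_self_nonneg (x : ι → ℝ) : 0 ≤ rdot x x :=
  Finset.sum_nonneg fun i _ => mul_self_nonneg _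

theorem integrable_gauss {ε : ℝ} (hε : 0 < ε) : Integrable fun x : ι → ℝ => Real.exp (-(ε * rdot x x)) := by
  have : (fun x : ι → ℝ => Real.exp (-(ε * rdot x x))) = fun t => ∏ i, Real.exp (-ε * (t i) ^ 2) := by
    ext t
    rw [← Real.exp_sum, rdot, Finset.mul_sum, ← Finset.sum_neg_distrib]
    congr 1
    refine Finset.sum_congr rfl fun i _ => ?_
    ring
  rw [this]
  exact Integrable.fintype_prod (f := fun _ s => Real.exp (-ε * s ^ 2))
    fun i => integrable_exp_neg_mul_sq hε

theorem gF_norm_le (F : (ι → ℂ) → ℂ) {ε : ℝ} (hε : 0 ≤ ε) (hε1 : ε ≤ 1) (x y : ι → ℝ) :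
    ‖gF F ε (cx x y)‖ ≤ Real.exp (rdot y y) * ‖F (cx x y)‖ := by
  rw [gF, norm_mul, norm_gauss, mul_comm]
  gcongr
  rw [← Real.exp_add]
  apply Real.exp_le_exp.2
  have := rdot_self_nonneg x
  have := rdot_self_nonneg y
  nlinarith

theorem gF_L1 {F : (ι → ℂ) → ℂ}
    {y v : ι → ℝ} (hb : ∃ C < (⊤ : ℝ≥0∞), ∀ s ∈ Icc (0:ℝ) 1, ∫⁻ x, ‖F (cx x (y + s • v))‖ₑ ^ 2 ≤ C)
    {ε : ℝ} (hε : 0 < ε) :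
    ∃ C < (⊤ : ℝ≥0∞), ∀ s ∈ Icc (0:ℝ) 1, ∫⁻ x, (‖gF F ε (cx x (y + s • v))‖₊ : ℝ≥0∞) ≤ C := by
  obtain ⟨C, hC, hC'⟩ := hb
  set M := 2 * rdot y y + 2 * rdot v v with hM
  refine ⟨ENNReal.ofReal (Real.exp (ε * M)) * (C + ∫⁻ x : ι → ℝ, ENNReal.ofReal (Real.exp (-(2 * ε * rdot x x)))),
    ENNReal.mul_lt_top ENNReal.ofReal_lt_top (ENNReal.add_lt_top.2 ⟨hC, 
      (integrable_gauss (by positivity)).lintegral_lt_top⟩), fun s hs => ?_⟩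
  refine le_trans ?_ (mul_le_mul_right (add_le_add_left (hC' s hs) _) _)
  rw [← lintegral_add_right _ (by
    have : Continuous fun x : ι → ℝ => Real.exp (-(2 * ε * rdot x x)) := by fun_prop
    exact this.measurable.ennreal_ofReal), ← lintegral_const_mul' _ _ ENNReal.ofReal_ne_top]
  apply lintegral_mono
  intro x
  simp only
  rw [← enorm_eq_nnnorm, ← ofReal_norm, ← ofReal_norm, ← ENNReal.ofReal_pow (norm_nonneg _),
    ← ENNReal.ofReal_add (by positivity) (by positivity), ← ENNReal.ofReal_mul (by positivity)]
  apply ENNReal.ofReal_le_ofReal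
  rw [gF, norm_mul, norm_gauss]
  have h1 : rdot (y + s • v) (y + s • v) ≤ M := by
    rw [hM]
    simp only [rdot, Finset.mul_sum, ← Finset.sum_add_distrib]
    refine Finset.sum_le_sum fun i _ => ?_
    simp
    have hs2 : s ^ 2 ≤ 1 := by nlinarith [hs.1, hs.2]
    have := mul_le_mul_of_nonneg_right hs2 (sq_nonneg (v i))
    nlinarith [sq_nonneg (y i - s * v i)]
  have h2 : Real.exp (ε * rdot (y + s • v) (y + s • v)) ≤ Real.exp (ε * M) := by
    apply Real.exp_le_exp.2; gcongr
  have h3 : Real.exp (-(2 * ε * rdot x x)) = Real.exp (-(ε * rdot x x)) ^ 2 := by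
    rw [← Real.exp_nat_mul]; congr 1; push_cast; ring
  rw [h3]
  set a := ‖F (cx x (y + s • v))‖ 
  set b := Real.exp (-(ε * rdot x x)) with hb
  have ha : 0 ≤ a := norm_nonneg _
  have hb0 : 0 < b := Real.exp_pos _
  calc a * (Real.exp (ε * rdot (y + s • v) (y + s • v)) * b) ≤ a * (Real.exp (ε * M) * b) := by gcongr
    _ = Real.exp (ε * M) * (a * b) := by ring
    _ ≤ _ := by gcongr; nlinarith [sq_nonneg (a - b)]

theorem gF_tendsto (F : (ι → ℂ) → ℂ) (z : ι → ℂ) {e : ℕ → ℝ} (he : Tendsto e atTop (𝓝 0)) :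
    Tendsto (fun n => gF F (e n) z) atTop (𝓝 (F z)) := by
  have : Continuous fun ε : ℝ => gF F ε z := by unfold gF; fun_prop
  have := (this.tendsto 0).comp he
  simpa [gF, Function.comp_def] using this

theorem gF_cont {Ω : Set (ι → ℝ)} {F : (ι → ℂ) → ℂ} (hF : DifferentiableOn ℂ F (tube Ω)) (ε : ℝ) :
    DifferentiableOn ℂ (gF F ε) (tube Ω) := by
  unfold gF
  apply hF.mul
  fun_prop

theorem gF_dist_tendsto {Ω : Set (ι → ℝ)} {F : (ι → ℂ) → ℂ} (hF : DifferentiableOn ℂ F (tube Ω))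
    {y : ι → ℝ} (hy : y ∈ Ω) (hb : ∫⁻ x, ‖F (cx x y)‖ₑ ^ 2 < ⊤) 
    {e : ℕ → ℝ} (he : Tendsto e atTop (𝓝 0)) (he' : ∀ n, 0 ≤ e n ∧ e n ≤ 1) :
    Tendsto (fun n => ∫⁻ x, ‖gF F (e n) (cx x y) - F (cx x y)‖ₑ ^ 2) atTop (𝓝 0) := by
  have h0 : (0 : ℝ≥0∞) = ∫⁻ x : ι → ℝ, (0 : ℝ≥0∞) := by simp
  rw [h0]
  have cF := slice_continuous hF.continuousOn hy
  have cG := fun n => slice_continuous (gF_cont hF (e n)).continuousOn hy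
  apply tendsto_lintegral_of_dominated_convergence
    (fun x => ENNReal.ofReal (Real.exp (rdot y y) + 1) ^ 2 * ‖F (cx x y)‖ₑ ^ 2)
  · intro n
    exact ((cG n).sub cF).measurable.enorm.pow_const 2
  · intro n
    refine Eventually.of_forall fun x => ?_
    simp only
    rw [← mul_pow]
    gcongr
    rw [← ofReal_norm, ← ofReal_norm, ← ENNReal.ofReal_mul (by positivity)]
    apply ENNReal.ofReal_le_ofReal
    refine (norm_sub_le _ _).trans ?_
    have := gF_norm_le F (he' n).1 (he' n).2 x y
    linarith
  · rw [lintegral_const_mul' _ _ (by simp)]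
    exact (ENNReal.mul_lt_top (by simp) hb).ne
  · refine Eventually.of_forall fun x => ?_
    have h1 := (gF_tendsto F (cx x y) he).sub_const (F (cx x y))
    rw [sub_self] at h1
    have h2 := ((ENNReal.continuous_pow 2).tendsto _).comp h1.enorm
    simpa [Function.comp_def] using h2

theorem gF_norm_tendsto {Ω : Set (ι → ℝ)} {F : (ι → ℂ) → ℂ} (hF : DifferentiableOn ℂ F (tube Ω))
    {y : ι → ℝ} (hy : y ∈ Ω) (hb : ∫⁻ x, ‖F (cx x y)‖ₑ ^ 2 < ⊤) 
    {e : ℕ → ℝ} (he : Tendsto e atTop (𝓝 0)) (he' : ∀ n, 0 ≤ e n ∧ e n ≤ 1) :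
    Tendsto (fun n => ∫⁻ x, ‖gF F (e n) (cx x y)‖ₑ ^ 2) atTop (𝓝 (∫⁻ x, ‖F (cx x y)‖ₑ ^ 2)) := by
  have cG := fun n => slice_continuous (gF_cont hF (e n)).continuousOn hy
  apply tendsto_lintegral_of_dominated_convergence
    (fun x => ENNReal.ofReal (Real.exp (rdot y y)) ^ 2 * ‖F (cx x y)‖ₑ ^ 2)
  · intro n
    exact (cG n).measurable.enorm.pow_const 2
  · intro n
    refine Eventually.of_forall fun x => ?_
    simp only
    rw [← mul_pow]
    gcongr
    rw [← ofReal_norm, ← ofReal_norm, ← ENNReal.ofReal_mul (by positivity)]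
    apply ENNReal.ofReal_le_ofReal
    exact gF_norm_le F (he' n).1 (he' n).2 x y
  · rw [lintegral_const_mul' _ _ (by simp)]
    exact (ENNReal.mul_lt_top (by simp) hb).ne
  · refine Eventually.of_forall fun x => ?_
    exact ((ENNReal.continuous_pow 2).tendsto _).comp (gF_tendsto F (cx x y) he).enorm

end PartD

section PartE

open MeasureTheory Set Filter
open scoped ENNReal NNReal Topology

set_option linter.unusedSectionVars false
variable {ι : Type*} [Fintype ι]

theorem ennreal_add_sq_le (a b : ℝ≥0∞) : (a + b) ^ 2 ≤ 2 * a ^ 2 + 2 * b ^ 2 := by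
  by_cases ha : a = ⊤
  · simp [ha]
  by_cases hb : b = ⊤
  · simp [hb]
  lift a to ℝ≥0 using ha
  lift b to ℝ≥0 using hb
  norm_cast
  rw [← NNReal.coe_le_coe]; push_cast
  nlinarith [sq_nonneg ((a:ℝ) - b)]

theorem enorm_sub_sq_le (a b c : ℂ) : ‖a - b‖ₑ ^ 2 ≤ 2 * ‖a - c‖ₑ ^ 2 + 2 * ‖b - c‖ₑ ^ 2 := by
  refine le_trans ?_ (ennreal_add_sq_le _ _)
  gcongr
  rw [show a - b = (a - c) - (b - c) by ring]
  exact enorm_sub_le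

theorem fatou_aux (y : ι → ℝ) {h : ℕ → (ι → ℝ) → ℂ} {g : (ι → ℝ) → ℂ} (hm : ∀ n, Measurable (h n))
    (hl : ∀ᵐ t, Tendsto (fun n => h n t) atTop (𝓝 (g t))) {b : ℕ → ℝ≥0∞} {B : ℝ≥0∞}
    (hb : Tendsto b atTop (𝓝 B)) (hle : ∀ n, ∫⁻ t, (ENNReal.ofReal (wt y t) * ‖h n t‖ₑ) ^ 2 ≤ b n) :
    ∫⁻ t, (ENNReal.ofReal (wt y t) * ‖g t‖ₑ) ^ 2 ≤ B := by
  have hw : Measurable fun t => ENNReal.ofReal (wt y t) := by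
    have : Continuous fun t => wt y t := by fun_prop
    exact this.measurable.ennreal_ofReal
  calc ∫⁻ t, (ENNReal.ofReal (wt y t) * ‖g t‖ₑ) ^ 2
      = ∫⁻ t, liminf (fun n => (ENNReal.ofReal (wt y t) * ‖h n t‖ₑ) ^ 2) atTop := by
        apply lintegral_congr_ae
        filter_upwards [hl] with t ht
        refine (Tendsto.liminf_eq ?_).symm
        exact ((ENNReal.continuous_pow 2).tendsto _).comp
          (ENNReal.Tendsto.const_mul ht.enorm (Or.inr ENNReal.ofReal_ne_top))
    _ ≤ liminf (fun n => ∫⁻ t, (ENNReal.ofReal (wt y t) * ‖h n t‖ₑ) ^ 2) atTop :=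
        lintegral_liminf_le fun n => (hw.mul (hm n).enorm).pow_const 2
    _ ≤ liminf b atTop := liminf_le_liminf (Eventually.of_forall hle)
    _ = B := hb.liminf_eq

set_option maxHeartbeats 1000000 in
theorem PW2 {Ω : Set (ι → ℝ)} (hΩ : IsOpen Ω) (hc : Convex ℝ Ω) (hne : Ω.Nonempty)
    {F : (ι → ℂ) → ℂ} (hF : DifferentiableOn ℂ F (tube Ω))
    (hb : ∀ y ∈ Ω, ∀ v, y + v ∈ Ω → ∃ C < (⊤ : ℝ≥0∞), ∀ s ∈ Icc (0:ℝ) 1,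
      ∫⁻ x, ‖F (cx x (y + s • v))‖ₑ ^ 2 ≤ C) :
    ∃ f : (ι → ℝ) → ℂ, StronglyMeasurable f ∧
      (∀ y ∈ Ω, ∫⁻ t, (ENNReal.ofReal (wt y t) * ‖f t‖ₑ) ^ 2 ≤ ∫⁻ x, ‖F (cx x y)‖ₑ ^ 2) ∧ 
      (∀ y ∈ Ω, ∫⁻ x, ‖F (cx x y)‖ₑ ^ 2 < ⊤) ∧ 
      ∀ z ∈ tube Ω, F z = FLT f z := by
  classical
  have hfin : ∀ y ∈ Ω, ∫⁻ x, ‖F (cx x y)‖ₑ ^ 2 < ⊤ := by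
    intro y hy
    obtain ⟨C, hC, h⟩ := hb y hy 0 (by simpa)
    have := h 0 (by simp)
    simp only [smul_zero, add_zero] at this
    exact this.trans_lt hC
  set e : ℕ → ℝ := fun n => 1 / ((n : ℝ) + 1) with he
  have he0 : Tendsto e atTop (𝓝 0) := tendsto_one_div_add_atTop_nhds_zero_nat
  have hep : ∀ n, 0 < e n := fun n => by simp only [he]; positivity
  have he1 : ∀ n, 0 ≤ e n ∧ e n ≤ 1 := fun n => ⟨(hep n).le, by
    simp only [he]; rw [div_le_one (by positivity)]; linarith [(Nat.cast_nonneg n : (0:ℝ) ≤ n)]⟩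
  have H := fun n => PW1 hΩ hc hne (gF_cont hF (e n)) (fun y hy v hv => gF_L1 (hb y hy v hv) (hep n))
  choose fn fm fw fi fF using H
  set d : (ι → ℝ) → ℕ → ℝ≥0∞ := fun y n => ∫⁻ x, ‖gF F (e n) (cx x y) - F (cx x y)‖ₑ ^ 2 with hd
  have hd0 : ∀ y ∈ Ω, Tendsto (d y) atTop (𝓝 0) := fun y hy => gF_dist_tendsto hF hy (hfin y hy) he0 he1
  have cF : ∀ y ∈ Ω, Continuous fun x => F (cx x y) := fun y hy => slice_continuous hF.continuousOn hy
  have cG := fun y (hy : y ∈ Ω) n => slice_continuous (gF_cont hF (e n)).continuousOn hy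
  have iG : ∀ y ∈ Ω, ∀ n, Integrable fun x => gF F (e n) (cx x y) := by
    intro y hy n
    obtain ⟨C, hC, h⟩ := gF_L1 (hb y hy 0 (by simpa)) (hep n)
    have := h 0 (by simp)
    simp only [smul_zero, add_zero] at this
    exact ⟨(cG y hy n).aestronglyMeasurable, this.trans_lt hC⟩
  -- L² bounds
  have hbn : ∀ y ∈ Ω, ∀ n, ∫⁻ t, (ENNReal.ofReal (wt y t) * ‖fn n t‖ₑ) ^ 2 ≤ ∫⁻ x, ‖gF F (e n) (cx x y)‖ₑ ^ 2 := by
    intro y hy n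
    refine le_trans (le_of_eq ?_) (plancherel_neg _ (iG y hy n))
    refine lintegral_congr fun t => ?_
    rw [← fw n y hy t, ← enorm_eq_nnnorm, enorm_mul, ← ofReal_norm (wt y t : ℂ), Complex.norm_of_nonneg (wt_pos _ _).le]
  have hbd : ∀ y ∈ Ω, ∀ n k, ∫⁻ t, (ENNReal.ofReal (wt y t) * ‖fn n t - fn k t‖ₑ) ^ 2 ≤ 2 * d y n + 2 * d y k := by
    intro y hy n k
    calc _ = ∫⁻ t : ι → ℝ, (‖FLT (fun x => gF F (e n) (cx x y) - gF F (e k) (cx x y)) (fun i => -((t i : ℝ) : ℂ))‖₊ : ℝ≥0∞) ^ 2 := by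
          refine lintegral_congr fun t => ?_
          rw [FLT_sub (cG y hy n).aestronglyMeasurable (cG y hy k).aestronglyMeasurable, ← fw n y hy t, ← fw k y hy t,
            ← mul_sub, ← enorm_eq_nnnorm, enorm_mul, ← ofReal_norm (wt y t : ℂ), Complex.norm_of_nonneg (wt_pos _ _).le]
          · simpa [wt, rdot] using iG y hy n
          · simpa [wt, rdot] using iG y hy k
      _ ≤ ∫⁻ x, ‖gF F (e n) (cx x y) - gF F (e k) (cx x y)‖ₑ ^ 2 := by
          have hp := plancherel_neg (fun x => gF F (e n) (cx x y) - gF F (e k) (cx x y)) ((iG y hy n).sub (iG y hy k))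
          simp only [enorm_eq_nnnorm]
          exact hp
      _ ≤ ∫⁻ x, (2 * ‖gF F (e n) (cx x y) - F (cx x y)‖ₑ ^ 2 + 2 * ‖gF F (e k) (cx x y) - F (cx x y)‖ₑ ^ 2) :=
          lintegral_mono fun x => enorm_sub_sq_le _ _ _
      _ = _ := by
          rw [lintegral_add_left, lintegral_const_mul', lintegral_const_mul'] <;> try simp
          exact (((cG y hy n).sub (cF y hy)).measurable.enorm.pow_const 2).const_mul _
  -- subsequence
  obtain ⟨y0, hy0⟩ := hne
  have hφ : ∃ φ : ℕ → ℕ, StrictMono φ ∧ ∀ N, ∀ k ≥ φ N, 4 * d y0 k < ((1/2 : ℝ≥0∞) ^ N) ^ 2 := by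
    apply extraction_forall_of_eventually (P := fun N n => ∀ k ≥ n, 4 * d y0 k < ((1/2 : ℝ≥0∞) ^ N) ^ 2)
    intro N
    have h4 : Tendsto (fun k => 4 * d y0 k) atTop (𝓝 0) := by
      simpa using ENNReal.Tendsto.const_mul (a := 4) (hd0 y0 hy0) (Or.inr (by simp))
    have := h4.eventually (gt_mem_nhds (show (0:ℝ≥0∞) < ((1/2 : ℝ≥0∞) ^ N) ^ 2 by
      apply ENNReal.pow_pos; apply ENNReal.pow_pos; simp))
    obtain ⟨n0, hn0⟩ := eventually_atTop.1 this
    filter_upwards [eventually_ge_atTop n0] with n hn k hk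
    exact hn0 k (hn.trans hk)
  obtain ⟨φ, φm, hφ⟩ := hφ
  have hw0 : Continuous fun t => wt y0 t := by fun_prop
  have hae : ∀ᵐ t, ∃ l, Tendsto (fun k => (wt y0 t : ℂ) * fn (φ k) t) atTop (𝓝 l) := by
    apply Lp.ae_tendsto_of_cauchy_eLpNorm (p := 2) (B := fun N => (1/2 : ℝ≥0∞) ^ N)
      (f := fun k t => (wt y0 t : ℂ) * fn (φ k) t)
    · intro n
      exact ((Complex.continuous_ofReal.comp hw0).measurable.mul (fm _)).aestronglyMeasurable
    · norm_num
    · rw [ENNReal.tsum_geometric]; simp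
    · intro N i j hi hj
      rw [eLpNorm_eq_lintegral_rpow_enorm_toReal (by simp) (by simp)]
      have e1 : ∫⁻ t, ‖((fun t => (wt y0 t : ℂ) * fn (φ i) t) - fun t => (wt y0 t : ℂ) * fn (φ j) t) t‖ₑ ^ (2:ℝ≥0∞).toReal
          = ∫⁻ t, (ENNReal.ofReal (wt y0 t) * ‖fn (φ i) t - fn (φ j) t‖ₑ) ^ 2 := by
        refine lintegral_congr fun t => ?_
        simp only [Pi.sub_apply, ← mul_sub, enorm_mul, ENNReal.toReal_ofNat, ENNReal.rpow_ofNat]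
        rw [← ofReal_norm (wt y0 t : ℂ), Complex.norm_of_nonneg (wt_pos _ _).le]
      rw [e1]
      have h1 := hφ N (φ i) (φm.monotone hi)
      have h2 := hφ N (φ j) (φm.monotone hj)
      have h3 : 2 * d y0 (φ i) + 2 * d y0 (φ j) < ((1/2 : ℝ≥0∞) ^ N) ^ 2 := by
        rcases le_total (d y0 (φ i)) (d y0 (φ j)) with h | h
        · refine lt_of_le_of_lt ?_ h2
          calc _ ≤ 2 * d y0 (φ j) + 2 * d y0 (φ j) := by gcongr
            _ = _ := by ring
        · refine lt_of_le_of_lt ?_ h1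
          calc _ ≤ 2 * d y0 (φ i) + 2 * d y0 (φ i) := by gcongr
            _ = _ := by ring
      have h4 := (hbd y0 hy0 (φ i) (φ j)).trans_lt h3
      have h5 := ENNReal.rpow_lt_rpow h4 (show (0:ℝ) < 1 / (2:ℝ≥0∞).toReal by simp)
      refine h5.trans_le (le_of_eq ?_)
      rw [← ENNReal.rpow_natCast _ 2, ← ENNReal.rpow_mul]
      simp
  have hae2 : ∀ᵐ t, ∃ l, Tendsto (fun k => fn (φ k) t) atTop (𝓝 l) := by
    filter_upwards [hae] with t ⟨l, hl⟩
    have hne : (wt y0 t : ℂ) ≠ 0 := by exact_mod_cast (wt_pos y0 t).ne'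
    refine ⟨(wt y0 t : ℂ)⁻¹ * l, ?_⟩
    have := hl.const_mul (wt y0 t : ℂ)⁻¹
    simpa [← mul_assoc, hne] using this
  obtain ⟨f, hfm, hf⟩ := exists_stronglyMeasurable_limit_of_tendsto_ae
    (fun n => (fm (φ n)).aestronglyMeasurable) hae2
  have hφt := φm.tendsto_atTop
  have hfb : ∀ y ∈ Ω, ∫⁻ t, (ENNReal.ofReal (wt y t) * ‖f t‖ₑ) ^ 2 ≤ ∫⁻ x, ‖F (cx x y)‖ₑ ^ 2 := fun y hy =>
    fatou_aux y (fun n => fm (φ n)) hf ((gF_norm_tendsto hF hy (hfin y hy) he0 he1).comp hφt)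
      (fun n => hbn y hy (φ n))
  refine ⟨f, hfm, hfb, hfin, ?_⟩
  have hfd : ∀ y ∈ Ω, ∀ k, ∫⁻ t, (ENNReal.ofReal (wt y t) * ‖fn k t - f t‖ₑ) ^ 2 ≤ 2 * d y k := by
    intro y hy k
    refine fatou_aux y (h := fun n t => fn k t - fn (φ n) t) (fun n => (fm k).sub (fm (φ n))) ?_
      (b := fun n => 2 * d y k + 2 * d y (φ n)) ?_ (fun n => hbd y hy k (φ n))
    · filter_upwards [hf] with t ht using ht.const_sub _
    · have : Tendsto (fun n => 2 * d y (φ n)) atTop (𝓝 0) := by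
        simpa using ENNReal.Tendsto.const_mul (a := 2) ((hd0 y hy).comp hφt) (Or.inr (by simp))
      simpa using tendsto_const_nhds.add this
  intro z hz
  obtain ⟨δ, hδ, hδ'⟩ := sg_mem hΩ hz
  obtain ⟨K, hK, hK'⟩ := corner_L2 (ι := ι) hδ
  have lim1 : Tendsto (fun k => FLT (fn k) z) atTop (𝓝 (F z)) := by
    refine (gF_tendsto F z he0).congr fun k => fF k z hz
  have lim2 : Tendsto (fun k => FLT (fn k) z) atTop (𝓝 (FLT f z)) := by
    rw [tendsto_iff_edist_tendsto_0]
    have bnd : ∀ k, edist (FLT (fn k) z) (FLT f z) ≤ K * ∑ σ : ι → Bool,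
        (2 * d ((fun i => (z i).im) + δ • sg σ) k) ^ (1 / 2 : ℝ) := by
      intro k
      rw [edist_eq_enorm_sub, ← FLT_sub (fm k).aestronglyMeasurable hfm.aestronglyMeasurable (fi k _ hz)
        (integrable_of_L2 hΩ hfm.aestronglyMeasurable (fun y hy => (hfb y hy).trans_lt (hfin y hy)) hz)]
      refine (enorm_FLT_le _ _).trans ((hK' _ _ ((fm k).sub hfm.measurable).aestronglyMeasurable).trans ?_)
      gcongr with σ
      exact hfd _ (hδ' σ) k
    refine tendsto_of_tendsto_of_tendsto_of_le_of_le tendsto_const_nhds ?_ (fun _ => zero_le) bnd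
    have : Tendsto (fun k => ∑ σ : ι → Bool,
        (2 * d ((fun i => (z i).im) + δ • sg σ) k) ^ (1 / 2 : ℝ)) atTop (𝓝 (∑ σ : ι → Bool, 0)) := by
      refine tendsto_finsetSum _ fun σ _ => ?_
      have h2 : Tendsto (fun n => 2 * d ((fun i => (z i).im) + δ • sg σ) n) atTop (𝓝 0) := by
        simpa using ENNReal.Tendsto.const_mul (a := 2) (hd0 _ (hδ' σ)) (Or.inr (by simp))
      have := h2.ennrpow_const (1 / 2 : ℝ)
      simpa using this
    simpa using ENNReal.Tendsto.const_mul (a := K) this (Or.inr hK.ne)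
  exact tendsto_nhds_unique lim1 lim2

end PartE

section PartFD

open MeasureTheory Set Filter
open scoped ENNReal NNReal Topology

set_option linter.unusedSectionVars false
variable {ι : Type*} [Fintype ι]

/-- admissible densities -/
def Adm (Ω : Set (ι → ℝ)) (f : (ι → ℝ) → ℂ) : Prop :=
  AEStronglyMeasurable f volume ∧ ∀ y ∈ Ω, Integrable fun t => (wt y t : ℂ) * f t

theorem Adm.dom {Ω : Set (ι → ℝ)} {f : (ι → ℝ) → ℂ} (h : Adm Ω f) (hΩ : IsOpen Ω) {y : ι → ℝ} (hy : y ∈ Ω) :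
    ∃ δ > 0, Integrable fun t => wt y t * Real.exp (2 * Real.pi * δ * ∑ i, |t i|) * ‖f t‖ := by
  classical
  obtain ⟨δ, hδ, hδ'⟩ := sg_mem hΩ hy
  refine ⟨δ, hδ, ?_⟩
  have h1 : Integrable fun t => ∑ σ : ι → Bool, ‖(wt (y + δ • sg σ) t : ℂ) * f t‖ :=
    integrable_finsetSum _ fun σ _ => (h.2 _ (hδ' σ)).norm
  refine h1.mono ?_ (Eventually.of_forall fun t => ?_)
  · have : Continuous fun t : ι → ℝ => wt y t * Real.exp (2 * Real.pi * δ * ∑ i, |t i|) := by fun_prop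
    exact this.aestronglyMeasurable.mul h.1.norm
  · have := corner δ y t
    have e : Real.exp (2 * Real.pi * δ * ∑ i, |t i|) * ebox δ t = 1 := by
      rw [ebox, ← Real.exp_add]; simp
    rw [Real.norm_of_nonneg (by have := wt_pos y t; positivity), Real.norm_of_nonneg (by positivity)]
    simp only [norm_mul, Complex.norm_of_nonneg (wt_pos _ _).le, ← Finset.sum_mul]
    gcongr
    calc wt y t * Real.exp (2 * Real.pi * δ * ∑ i, |t i|) 
        ≤ (∑ σ : ι → Bool, ebox δ t * wt (y + δ • sg σ) t) * Real.exp (2 * Real.pi * δ * ∑ i, |t i|) := by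
          rw [← Finset.mul_sum]; gcongr
      _ = _ := by rw [← Finset.mul_sum, mul_comm, ← mul_assoc, e, one_mul]

theorem Adm.FD {Ω : Set (ι → ℝ)} {f : (ι → ℝ) → ℂ} [DecidableEq ι] (h : Adm Ω f) (hΩ : IsOpen Ω) {z : ι → ℂ} (hz : z ∈ tube Ω) :
    DifferentiableAt ℂ (FLT f) z ∧ ∀ i, fderiv ℂ (FLT f) z (Pi.single i 1) =
      FLT (fun t => (2 * Real.pi * Complex.I * t i) * f t) z := by
  obtain ⟨δ, hδ, hInteg⟩ := h.dom hΩ hz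
  set y : ι → ℝ := fun i => (z i).im with hy
  set L : (ι → ℝ) → ((ι → ℂ) →L[ℂ] ℂ) := fun t => ∑ i, (2 * Real.pi * Complex.I * t i) • ContinuousLinearMap.proj i with hL
  have hLn : ∀ t, ‖L t‖ ≤ 2 * Real.pi * ∑ i, |t i| := by
    intro t
    apply ContinuousLinearMap.opNorm_le_bound _ (by positivity)
    intro v
    simp only [hL, _root_.sum_apply, _root_.smul_apply, ContinuousLinearMap.proj_apply]
    refine (norm_sum_le _ _).trans ?_
    rw [Finset.mul_sum, Finset.sum_mul]
    refine Finset.sum_le_sum fun i _ => ?_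
    simp only [smul_eq_mul, norm_mul, Complex.norm_ofNat, Complex.norm_real, Complex.norm_I, Real.norm_eq_abs, abs_of_pos Real.pi_pos, mul_one]
    gcongr
    exact norm_le_pi_norm v i
  have hLc : Continuous L := by simp only [hL]; fun_prop
  set F' : (ι → ℂ) → (ι → ℝ) → ((ι → ℂ) →L[ℂ] ℂ) := fun w t =>
    (Complex.exp (2 * Real.pi * Complex.I * dotc w t) * f t) • L t with hF'
  set s : Set (ι → ℂ) := Metric.ball z (δ / 2) with hs
  set bound : (ι → ℝ) → ℝ := fun t => 2 / δ * (wt y t * Real.exp (2 * Real.pi * δ * ∑ i, |t i|) * ‖f t‖) with hbound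
  have hae : ∀ w ∈ s, ∀ t, ‖F' w t‖ ≤ bound t := by
    intro w hw t
    simp only [hF', norm_smul, norm_mul, norm_exp_dotc, hbound]
    set S := ∑ i, |t i| with hS
    have hS0 : 0 ≤ S := by positivity
    have h1 : wt (fun i => (w i).im) t ≤ wt y t * Real.exp (2 * Real.pi * (δ / 2) * S) := by
      rw [wt, wt, ← Real.exp_add]
      apply Real.exp_le_exp.2
      have : rdot y t - rdot (fun i => (w i).im) t ≤ δ / 2 * S := by
        rw [rdot, rdot, ← Finset.sum_sub_distrib, hS, Finset.mul_sum]
        refine Finset.sum_le_sum fun i _ => ?_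
        rw [← sub_mul]
        refine (le_abs_self _).trans ?_
        rw [abs_mul]
        gcongr
        have h2 : ‖w i - z i‖ ≤ δ / 2 := by
          have := norm_le_pi_norm (w - z) i
          have h3 : ‖w - z‖ < δ / 2 := by simpa [hs, dist_eq_norm] using hw
          exact this.trans h3.le
        have h4 := Complex.abs_im_le_norm (w i - z i)
        rw [Complex.sub_im, abs_sub_comm] at h4
        exact h4.trans h2
      have := Real.pi_pos
      nlinarith
    have h2 : ‖L t‖ ≤ 2 / δ * Real.exp (2 * Real.pi * (δ / 2) * S) := by
      refine (hLn t).trans ?_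
      have := Real.add_one_le_exp (2 * Real.pi * (δ / 2) * S)
      rw [div_mul_eq_mul_div, le_div_iff₀ hδ]
      nlinarith
    calc wt (fun i => (w i).im) t * ‖f t‖ * ‖L t‖ 
        ≤ wt y t * Real.exp (2 * Real.pi * (δ / 2) * S) * ‖f t‖ * (2 / δ * Real.exp (2 * Real.pi * (δ / 2) * S)) := by
          gcongr
          have := wt_pos y t
          positivity
      _ = 2 / δ * (wt y t * (Real.exp (2 * Real.pi * (δ / 2) * S) * Real.exp (2 * Real.pi * (δ / 2) * S)) * ‖f t‖) := by ring
      _ = _ := by rw [← Real.exp_add]; congr 4; ring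
  have hexpc : ∀ w : ι → ℂ, Continuous fun t => Complex.exp (2 * Real.pi * Complex.I * dotc w t) := by
    intro w; fun_prop
  have hF'm : AEStronglyMeasurable (F' z) volume :=
    AEStronglyMeasurable.smul ((hexpc z).aestronglyMeasurable.mul h.1) hLc.aestronglyMeasurable
  have hbi : Integrable bound := hInteg.const_mul _
  have key : HasFDerivAt (FLT f) (∫ t, F' z t) z := by
    refine hasFDerivAt_integral_of_dominated_of_fderiv_le (bound := bound) (s := s)
      (F := fun w t => Complex.exp (2 * Real.pi * Complex.I * dotc w t) * f t)
      (Metric.ball_mem_nhds z (by positivity)) (Eventually.of_forall fun w => (hexpc w).aestronglyMeasurable.mul h.1)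
      (integrable_exp_dotc h.1 (h.2 _ hz)) hF'm
      (Eventually.of_forall fun t w hw => hae w hw t) hbi
      (Eventually.of_forall fun t w hw => ?_)
    have hd : HasFDerivAt (fun w : ι → ℂ => 2 * Real.pi * Complex.I * dotc w t) (L t) w := by
      have : (fun w : ι → ℂ => 2 * Real.pi * Complex.I * dotc w t) = L t := by
        ext w
        simp only [hL, dotc, _root_.sum_apply, _root_.smul_apply, ContinuousLinearMap.proj_apply, Finset.mul_sum, smul_eq_mul]
        refine Finset.sum_congr rfl fun i _ => ?_
        ring
      rw [this]
      exact (L t).hasFDerivAt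
    have := hd.cexp.mul_const (f t)
    refine this.congr_fderiv ?_
    show f t • Complex.exp (2 * Real.pi * Complex.I * dotc w t) • L t
      = (Complex.exp (2 * Real.pi * Complex.I * dotc w t) * f t) • L t
    rw [smul_smul, mul_comm]
  refine ⟨key.differentiableAt, fun i => ?_⟩
  have hF'i : Integrable (F' z) := hbi.mono' hF'm (Eventually.of_forall fun t => hae z (Metric.mem_ball_self (by positivity)) t)
  rw [key.fderiv, ContinuousLinearMap.integral_apply hF'i]
  unfold FLT
  congr 1; ext t
  simp only [hF', hL, _root_.sum_apply, _root_.smul_apply, ContinuousLinearMap.proj_apply, smul_eq_mul]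
  rw [Finset.sum_eq_single i]
  · simp; ring
  · intro j _ hj; simp [hj]
  · simp

theorem Adm.mul_coord {Ω : Set (ι → ℝ)} {f : (ι → ℝ) → ℂ} (h : Adm Ω f) (hΩ : IsOpen Ω) (c : ℂ) (i : ι) :
    Adm Ω (fun t => (c * t i) * f t) := by
  have hm : AEStronglyMeasurable (fun t : ι → ℝ => (c * t i) * f t) volume := by
    have : Continuous fun t : ι → ℝ => c * (t i : ℂ) := by fun_prop
    exact this.aestronglyMeasurable.mul h.1
  refine ⟨hm, fun y hy => ?_⟩
  obtain ⟨δ, hδ, hInteg⟩ := h.dom hΩ hy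
  have hw : Continuous fun t : ι → ℝ => (wt y t : ℂ) := by fun_prop
  refine (hInteg.const_mul (‖c‖ / (2 * Real.pi * δ))).mono' (hw.aestronglyMeasurable.mul hm) (Eventually.of_forall fun t => ?_)
  simp only [norm_mul, Complex.norm_of_nonneg (wt_pos _ _).le, Complex.norm_real, Real.norm_eq_abs]
  have h1 : |t i| ≤ Real.exp (2 * Real.pi * δ * ∑ i, |t i|) / (2 * Real.pi * δ) := by
    rw [le_div_iff₀ (by positivity)]
    have := Real.add_one_le_exp (2 * Real.pi * δ * ∑ i, |t i|)
    have h2 : |t i| ≤ ∑ i, |t i| := Finset.single_le_sum (f := fun i => |t i|) (fun _ _ => abs_nonneg _) (Finset.mem_univ i)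
    have : |t i| * (2 * Real.pi * δ) ≤ (2 * Real.pi * δ * ∑ i, |t i|) := by rw [mul_comm]; gcongr
    linarith
  calc wt y t * (‖c‖ * |t i| * ‖f t‖) ≤ wt y t * (‖c‖ * (Real.exp (2 * Real.pi * δ * ∑ i, |t i|) / (2 * Real.pi * δ)) * ‖f t‖) := by
        have := wt_pos y t
        gcongr
    _ = _ := by ring

theorem Adm.add {Ω : Set (ι → ℝ)} {f g : (ι → ℝ) → ℂ} (h : Adm Ω f) (h' : Adm Ω g) : Adm Ω (fun t => f t + g t) :=
  ⟨h.1.add h'.1, fun y hy => by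
    refine ((h.2 y hy).add (h'.2 y hy)).congr (Eventually.of_forall fun t => ?_)
    simp only [Pi.add_apply]; ring⟩

theorem Adm.const_mul {Ω : Set (ι → ℝ)} {f : (ι → ℝ) → ℂ} (h : Adm Ω f) (c : ℂ) : Adm Ω (fun t => c * f t) :=
  ⟨h.1.const_mul c, fun y hy => by
    have := (h.2 y hy).const_mul c
    refine this.congr (Eventually.of_forall fun t => ?_)
    simp only; ring⟩

theorem FLT_const_mul (f : (ι → ℝ) → ℂ) (c : ℂ) (z : ι → ℂ) : FLT (fun t => c * f t) z = c * FLT f z := by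
  unfold FLT
  rw [← integral_const_mul]
  congr 1; ext t; ring

theorem FLT_add {Ω : Set (ι → ℝ)} {f g : (ι → ℝ) → ℂ} (h : Adm Ω f) (h' : Adm Ω g) {z : ι → ℂ} (hz : z ∈ tube Ω) :
    FLT (fun t => f t + g t) z = FLT f z + FLT g z := by
  unfold FLT
  rw [← integral_add (integrable_exp_dotc h.1 (h.2 _ hz)) (integrable_exp_dotc h'.1 (h'.2 _ hz))]
  simp only [mul_add]

end PartFD

section PartBx

open MeasureTheory Set Filter
open scoped ENNReal NNReal Topology


theorem isOpen_Sigma3 : IsOpen Sigma3 := by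
  have : Sigma3 = {y | 0 < y 0 * y 1 - (y 2) ^ 2} ∩ {y | 0 < y 0} := rfl
  rw [this]
  exact (isOpen_lt (by fun_prop) (by fun_prop)).inter (isOpen_lt (by fun_prop) (by fun_prop))

theorem TSigma_eq : TSigma = tube Sigma3 := rfl

theorem isOpen_TSigma : IsOpen TSigma := isOpen_tube isOpen_Sigma3

theorem Sigma3_pos {y : Fin 3 → ℝ} (hy : y ∈ Sigma3) : 0 < y 1 := by
  obtain ⟨h1, h2⟩ := hy
  by_contra h
  nlinarith [sq_nonneg (y 2)]

theorem Sigma3_add {y y' : Fin 3 → ℝ} (hy : y ∈ Sigma3) (hy' : y' ∈ Sigma3) : y + y' ∈ Sigma3 := by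
  have p1 := Sigma3_pos hy
  have p2 := Sigma3_pos hy'
  obtain ⟨h1, h2⟩ := hy
  obtain ⟨h3, h4⟩ := hy'
  refine ⟨?_, by simp only [Pi.add_apply]; positivity⟩
  simp only [Pi.add_apply]
  have key : 2 * (y 2 * y' 2) ≤ y 0 * y' 1 + y 1 * y' 0 := by
    have a : (y 2 * y' 2) ^ 2 ≤ (y 0 * y' 1) * (y 1 * y' 0) := by
      have : (y 2) ^ 2 * (y' 2) ^ 2 ≤ (y 0 * y 1) * (y' 0 * y' 1) := by
        apply mul_le_mul <;> first | positivity | linarith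
      nlinarith
    have b : 0 < y 0 * y' 1 := by positivity
    have c : 0 < y 1 * y' 0 := by positivity
    apply le_of_sq_le_sq _ (by positivity)
    nlinarith [sq_nonneg (y 0 * y' 1 - y 1 * y' 0)]
  nlinarith

theorem Sigma3_smul {y : Fin 3 → ℝ} (hy : y ∈ Sigma3) {c : ℝ} (hc : 0 < c) : c • y ∈ Sigma3 := by
  obtain ⟨h1, h2⟩ := hy
  refine ⟨?_, by simp only [Pi.smul_apply, smul_eq_mul]; positivity⟩
  simp only [Pi.smul_apply, smul_eq_mul]
  have : 0 < c ^ 2 * (y 0 * y 1 - y 2 ^ 2) := by positivity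
  linarith

theorem convex_Sigma3 : Convex ℝ Sigma3 := by
  apply convex_iff_forall_pos.2
  intro y hy y' hy' a b ha hb _
  exact Sigma3_add (Sigma3_smul hy ha) (Sigma3_smul hy' hb)

theorem Sigma3_mem (a b : ℝ) (ha : 0 < a) (hb : 0 < b) : (![a, b, 0] : Fin 3 → ℝ) ∈ Sigma3 := by
  refine ⟨?_, ?_⟩
  · simp; positivity
  · simpa

/-- symbol -/
def PP (t : Fin 3 → ℝ) : ℝ := 4 * Real.pi ^ 2 * (4 * t 0 * t 1 - t 2 ^ 2)

theorem pd_congr {F G : (Fin 3 → ℂ) → ℂ} (h : EqOn F G TSigma) (i : Fin 3) : EqOn (pd i F) (pd i G) TSigma := by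
  intro z hz
  have : F =ᶠ[𝓝 z] G := h.eventuallyEq_of_mem (isOpen_TSigma.mem_nhds hz)
  simp only [pd, this.fderiv_eq]

theorem BoxS_congr {F G : (Fin 3 → ℂ) → ℂ} (h : EqOn F G TSigma) : EqOn (BoxS F) (BoxS G) TSigma := by
  intro z hz
  simp only [BoxS]
  rw [pd_congr (pd_congr h 1) 0 hz, pd_congr (pd_congr h 2) 2 hz]

theorem pd_FLT {f : (Fin 3 → ℝ) → ℂ} (h : Adm Sigma3 f) (i : Fin 3) :
    EqOn (pd i (FLT f)) (FLT (fun t => (2 * Real.pi * Complex.I * t i) * f t)) TSigma :=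
  fun _ hz => (h.FD isOpen_Sigma3 hz).2 i

theorem BoxS_FLT {f : (Fin 3 → ℝ) → ℂ} (h : Adm Sigma3 f) :
    Adm Sigma3 (fun t => (PP t : ℂ) * f t) ∧ EqOn (BoxS (FLT f)) (FLT (fun t => (PP t : ℂ) * f t)) TSigma := by
  have h01 := (h.mul_coord isOpen_Sigma3 (2 * Real.pi * Complex.I) 1)
  have h01' := (h01.mul_coord isOpen_Sigma3 (2 * Real.pi * Complex.I) 0)
  have h2 := (h.mul_coord isOpen_Sigma3 (2 * Real.pi * Complex.I) 2)
  have h2' := (h2.mul_coord isOpen_Sigma3 (2 * Real.pi * Complex.I) 2)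
  have heq : (fun t : Fin 3 → ℝ => (PP t : ℂ) * f t) = fun t => -4 * (2 * Real.pi * Complex.I * t 0 * (2 * Real.pi * Complex.I * t 1 * f t))
      + 2 * Real.pi * Complex.I * t 2 * (2 * Real.pi * Complex.I * t 2 * f t) := by
    ext t
    simp only [PP]; push_cast
    linear_combination (- (-4 * 4 * Real.pi ^ 2 * t 0 * t 1 + 4 * Real.pi ^ 2 * t 2 ^ 2) * f t) * Complex.I_sq
  rw [heq]
  refine ⟨(h01'.const_mul (-4)).add h2', fun z hz => ?_⟩
  rw [FLT_add (h01'.const_mul (-4)) h2' hz, FLT_const_mul, BoxS, pd_congr (pd_FLT h 1) 0 hz, pd_congr (pd_FLT h 2) 2 hz,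
    pd_FLT h01 0 hz, pd_FLT h2 2 hz]

theorem BoxS_iter {f : (Fin 3 → ℝ) → ℂ} (h : Adm Sigma3 f) {F : (Fin 3 → ℂ) → ℂ} (hF : EqOn F (FLT f) TSigma) (m : ℕ) :
    Adm Sigma3 (fun t => (PP t : ℂ) ^ m * f t) ∧ EqOn (BoxS^[m] F) (FLT (fun t => (PP t : ℂ) ^ m * f t)) TSigma := by
  induction m with
  | zero => simpa using ⟨h, hF⟩
  | succ n ih =>
    obtain ⟨h1, h2⟩ := ih
    have h3 := BoxS_FLT h1
    rw [Function.iterate_succ_apply']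
    have e : (fun t : Fin 3 → ℝ => (PP t : ℂ) ^ (n+1) * f t) = fun t => (PP t : ℂ) * ((PP t : ℂ) ^ n * f t) := by
      ext t; ring
    rw [e]
    exact ⟨h3.1, (BoxS_congr h2).trans h3.2⟩

end PartBx

section PartCv

open MeasureTheory Set Filter
open scoped ENNReal NNReal Topology


/-- positive quadrant -/
def Q2 : Set (Fin 2 → ℝ) := {y | 0 < y 0 ∧ 0 < y 1}

theorem isOpen_Q2 : IsOpen Q2 := by
  have : Q2 = {y | 0 < y 0} ∩ {y | 0 < y 1} := rfl
  rw [this]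
  exact (isOpen_lt (by fun_prop) (by fun_prop)).inter (isOpen_lt (by fun_prop) (by fun_prop))

theorem isOpen_UHP : IsOpen UHP := isOpen_lt continuous_const Complex.continuous_im

theorem lintegral_complex {h : ℂ → ℝ≥0∞} (hh : Measurable h) :
    ∫⁻ z, h z = ∫⁻ x : ℝ, ∫⁻ y : ℝ, h (x + y * Complex.I) := by
  rw [← (Complex.volume_preserving_equiv_real_prod.symm).lintegral_comp_emb
    (MeasurableEquiv.measurableEmbedding _)]
  rw [show (volume : Measure (ℝ × ℝ)) = volume.prod volume from rfl, lintegral_prod]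
  · refine lintegral_congr fun x => lintegral_congr fun y => ?_
    congr 1
    apply Complex.ext <;> simp [Complex.measurableEquivRealProd]
  · exact (hh.comp (MeasurableEquiv.measurable _)).aemeasurable

theorem lintegral_fin2 {h : (Fin 2 → ℝ) → ℝ≥0∞} (hh : Measurable h) :
    ∫⁻ s, h s = ∫⁻ a : ℝ, ∫⁻ b : ℝ, h ![a, b] := by
  rw [← ((volume_preserving_finTwoArrow ℝ).symm).lintegral_comp_emb (MeasurableEquiv.measurableEmbedding _)]
  rw [show (volume : Measure (ℝ × ℝ)) = volume.prod volume from rfl, lintegral_prod]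
  · rfl
  · exact (hh.comp (MeasurableEquiv.measurable _)).aemeasurable

theorem lintegral_four {H : ℂ × ℂ → ℝ≥0∞} (hH : Measurable H) :
    ∫⁻ p, H p = ∫⁻ y : Fin 2 → ℝ, ∫⁻ x : Fin 2 → ℝ, H (x 0 + y 0 * Complex.I, x 1 + y 1 * Complex.I) := by
  have hk : Measurable fun q : ℝ × ℝ × ℝ × ℝ => H ((q.1:ℂ) + q.2.1 * Complex.I, (q.2.2.1:ℂ) + q.2.2.2 * Complex.I) :=
    hH.comp (by fun_prop)
  rw [show (volume : Measure (ℂ × ℂ)) = volume.prod volume from rfl, lintegral_prod _ hH.aemeasurable,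
    lintegral_complex (by fun_prop), lintegral_fin2 (by
      apply Measurable.lintegral_prod_right'  (f := fun p : (Fin 2 → ℝ) × (Fin 2 → ℝ) => H ((p.2 0:ℂ) + p.1 0 * Complex.I, (p.2 1:ℂ) + p.1 1 * Complex.I))
      exact hH.comp (by fun_prop))]
  have e1 : ∀ x0 y0 : ℝ, ∫⁻ z, H ((x0:ℂ) + y0 * Complex.I, z) =
      ∫⁻ x1 : ℝ, ∫⁻ y1 : ℝ, H ((x0:ℂ) + y0 * Complex.I, (x1:ℂ) + y1 * Complex.I) := fun x0 y0 =>
    lintegral_complex (hH.comp (by fun_prop))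
  simp only [e1]
  have e2 : ∀ y0 y1 : ℝ, ∫⁻ x : Fin 2 → ℝ, H (x 0 + (![y0, y1] 0 : ℝ) * Complex.I, x 1 + (![y0, y1] 1 : ℝ) * Complex.I) = 
      ∫⁻ x0 : ℝ, ∫⁻ x1 : ℝ, H ((x0:ℂ) + y0 * Complex.I, (x1:ℂ) + y1 * Complex.I) := fun y0 y1 => by
    exact lintegral_fin2 (hH.comp (by fun_prop))
  simp only [e2]
  rw [lintegral_lintegral_swap]
  · refine lintegral_congr fun y0 => ?_
    have : ∀ x0 : ℝ, ∫⁻ x1 : ℝ, ∫⁻ y1 : ℝ, H ((x0:ℂ) + y0 * Complex.I, (x1:ℂ) + y1 * Complex.I) = 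
        ∫⁻ y1 : ℝ, ∫⁻ x1 : ℝ, H ((x0:ℂ) + y0 * Complex.I, (x1:ℂ) + y1 * Complex.I) := by
      intro x0
      apply lintegral_lintegral_swap
      exact (hH.comp (by fun_prop)).aemeasurable
    simp only [this]
    rw [lintegral_lintegral_swap]
    apply Measurable.aemeasurable
    exact Measurable.lintegral_prod_right' (f := fun p : (ℝ × ℝ) × ℝ =>
      H ((p.1.1:ℂ) + y0 * Complex.I, (p.2:ℂ) + p.1.2 * Complex.I)) (hH.comp (by fun_prop))
  · apply Measurable.aemeasurable
    refine Measurable.lintegral_prod_right' (f := fun p : (ℝ × ℝ) × ℝ => ∫⁻ y1 : ℝ, 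
      H ((p.1.1:ℂ) + p.1.2 * Complex.I, (p.2:ℂ) + y1 * Complex.I)) ?_
    exact Measurable.lintegral_prod_right' (f := fun p : ((ℝ × ℝ) × ℝ) × ℝ =>
      H ((p.1.1.1:ℂ) + p.1.1.2 * Complex.I, (p.1.2:ℂ) + p.2 * Complex.I)) (hH.comp (by fun_prop))

theorem berg_eq (α : ℝ) {G : ℂ × ℂ → ℂ} (hG : ContinuousOn G (UHP ×ˢ UHP)) :
    bergNormSqProd α α G = ∫⁻ y in Q2, ENNReal.ofReal (y 0 ^ α) * ENNReal.ofReal (y 1 ^ α) *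
      ∫⁻ x : Fin 2 → ℝ, ‖G (x 0 + y 0 * Complex.I, x 1 + y 1 * Complex.I)‖ₑ ^ 2 := by
  classical
  have hS : MeasurableSet (UHP ×ˢ UHP) := isOpen_UHP.measurableSet.prod isOpen_UHP.measurableSet
  have hd : Measurable fun z : ℂ => ENNReal.ofReal (z.im ^ α) := by fun_prop
  have hG2 : Measurable ((UHP ×ˢ UHP).indicator fun z => ‖G z‖ₑ ^ 2) := by
    have h1 : Measurable ((UHP ×ˢ UHP).indicator G) := by
      have := hG.measurable_piecewise (g := 0) continuousOn_const hS
      rwa [piecewise_eq_indicator] at this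
    have : ((UHP ×ˢ UHP).indicator fun z => ‖G z‖ₑ ^ 2) = fun z => ‖(UHP ×ˢ UHP).indicator G z‖ₑ ^ 2 := by
      ext z
      by_cases hz : z ∈ UHP ×ˢ UHP <;> simp [hz]
    rw [this]
    exact h1.enorm.pow_const 2
  set H : ℂ × ℂ → ℝ≥0∞ := fun z => ENNReal.ofReal (z.1.im ^ α) * ENNReal.ofReal (z.2.im ^ α) * 
    (UHP ×ˢ UHP).indicator (fun z => ‖G z‖ₑ ^ 2) z with hHd
  have hd2 : Measurable fun z : ℂ × ℂ => ENNReal.ofReal (z.1.im ^ α) * ENNReal.ofReal (z.2.im ^ α) :=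
    (hd.comp measurable_fst).mul (hd.comp measurable_snd)
  have hHm : Measurable H := hd2.mul hG2
  have e1 : bergNormSqProd α α G = ∫⁻ p, H p := by
    unfold bergNormSqProd Vm
    rw [prod_withDensity hd hd, Measure.prod_restrict, lintegral_withDensity_eq_lintegral_mul_non_measurable₀ _ hd2.aemeasurable
      (Eventually.of_forall fun _ => ENNReal.mul_lt_top ENNReal.ofReal_lt_top ENNReal.ofReal_lt_top), ← lintegral_indicator hS]
    refine lintegral_congr fun z => ?_
    by_cases hz : z ∈ UHP ×ˢ UHP <;> simp only [indicator_of_mem, indicator_of_notMem, hz, hHd, not_false_eq_true, mul_zero]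
    rfl
  rw [e1, lintegral_four hHm, ← lintegral_indicator isOpen_Q2.measurableSet]
  refine lintegral_congr fun y => ?_
  by_cases hy : y ∈ Q2
  · rw [indicator_of_mem hy]
    rw [← lintegral_const_mul' _ _ (ENNReal.mul_ne_top ENNReal.ofReal_ne_top ENNReal.ofReal_ne_top)]
    refine lintegral_congr fun x => ?_
    have : ((x 0 + y 0 * Complex.I, x 1 + y 1 * Complex.I) : ℂ × ℂ) ∈ UHP ×ˢ UHP := by
      simpa [UHP, Q2] using hy
    simp [hHd, this]
  · rw [indicator_of_notMem hy, ← lintegral_zero (μ := (volume : Measure (Fin 2 → ℝ)))]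
    refine lintegral_congr fun x => ?_
    have : ((x 0 + y 0 * Complex.I, x 1 + y 1 * Complex.I) : ℂ × ℂ) ∉ UHP ×ˢ UHP := by
      simpa [UHP, Q2] using hy
    simp [hHd, this]

end PartCv

section PartW

open MeasureTheory Set Filter
open scoped ENNReal NNReal Topology


/-- one-dimensional Laplace weight -/
def lw (α r : ℝ) : ℝ≥0∞ := ∫⁻ y in Ioi (0:ℝ), ENNReal.ofReal (y ^ α) * ENNReal.ofReal (Real.exp (-(4 * Real.pi * (y * r))))

theorem lw_pos {α : ℝ} (hα : -1 < α) : ∃ c : ℝ, 0 < c ∧ ∀ r > 0, lw α r = ENNReal.ofReal (c * (r ^ (α + 1))⁻¹) := by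
  refine ⟨(1 / (4 * Real.pi)) ^ (α + 1) * Real.Gamma (α + 1), mul_pos (by positivity) (Real.Gamma_pos_of_pos (by linarith)), fun r hr => ?_⟩
  have h := Real.integral_rpow_mul_exp_neg_mul_Ioi (a := α + 1) (r := 4 * Real.pi * r) (by linarith) (by positivity)
  have hi : IntegrableOn (fun y : ℝ => y ^ (α + 1 - 1) * Real.exp (-(4 * Real.pi * r * y))) (Ioi 0) := by
    by_contra hcon
    have := integral_undef hcon
    rw [h] at this
    have h2 : 0 < (1 / (4 * Real.pi * r)) ^ (α + 1) * Real.Gamma (α + 1) :=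
      mul_pos (by positivity) (Real.Gamma_pos_of_pos (by linarith))
    linarith
  have e : (1 / (4 * Real.pi)) ^ (α + 1) * Real.Gamma (α + 1) * (r ^ (α + 1))⁻¹ = (1 / (4 * Real.pi * r)) ^ (α + 1) * Real.Gamma (α + 1) := by
    rw [show 1 / (4 * Real.pi * r) = 1 / (4 * Real.pi) * r⁻¹ by field_simp, Real.mul_rpow (by positivity) (by positivity), Real.inv_rpow hr.le]
    ring
  rw [e, ← h, ofReal_integral_eq_lintegral_ofReal hi]
  · unfold lw
    refine setLIntegral_congr_fun measurableSet_Ioi fun y hy => ?_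
    have hy : 0 < y := hy
    rw [← ENNReal.ofReal_mul (by positivity)]
    congr 3
    · ring_nf
    · congr 1; ring
  · filter_upwards [ae_restrict_mem measurableSet_Ioi] with y hy
    have hy : 0 < y := hy
    simp only [Pi.zero_apply]
    positivity

theorem lw_neg (α : ℝ) {r : ℝ} (hr : r ≤ 0) : lw α r = ⊤ := by
  rw [eq_top_iff]
  have h1 : ∫⁻ y in Ioi (0:ℝ), ENNReal.ofReal (y ^ α) = ⊤ := by
    by_contra hcon
    refine not_integrableOn_Ioi_rpow α ⟨by fun_prop, ?_⟩
    rw [hasFiniteIntegral_iff_enorm]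
    refine lt_of_le_of_lt (le_of_eq ?_) (lt_top_iff_ne_top.2 hcon)
    refine setLIntegral_congr_fun measurableSet_Ioi fun y hy => ?_
    have hy : 0 < y := hy
    rw [← ofReal_norm, Real.norm_of_nonneg (by positivity)]
  rw [← h1]
  refine setLIntegral_mono_ae' measurableSet_Ioi (Eventually.of_forall fun y hy => ?_)
  have hy : 0 < y := hy
  refine le_mul_of_one_le_right' ?_
  rw [ENNReal.one_le_ofReal]
  apply Real.one_le_exp
  have : y * r ≤ 0 := mul_nonpos_of_nonneg_of_nonpos hy.le hr
  have := Real.pi_pos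
  nlinarith

theorem lw_meas (α : ℝ) : Measurable (lw α) := by
  unfold lw
  apply Measurable.lintegral_prod_right' (f := fun p : ℝ × ℝ => ENNReal.ofReal (p.2 ^ α) * ENNReal.ofReal (Real.exp (-(4 * Real.pi * (p.2 * p.1)))))
  fun_prop

theorem wt_sq_fin2 (a b : ℝ) (s : Fin 2 → ℝ) : (ENNReal.ofReal (wt ![a, b] s)) ^ 2 =
    ENNReal.ofReal (Real.exp (-(4 * Real.pi * (a * s 0)))) * ENNReal.ofReal (Real.exp (-(4 * Real.pi * (b * s 1)))) := by
  rw [← ENNReal.ofReal_pow (wt_pos _ _).le, ← ENNReal.ofReal_mul (by positivity), wt, ← Real.exp_nat_mul, ← Real.exp_add]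
  congr 2
  simp [rdot, Fin.sum_univ_two]; ring

theorem lw_two (α : ℝ) (s : Fin 2 → ℝ) : ∫⁻ y in Q2, ENNReal.ofReal (y 0 ^ α) * ENNReal.ofReal (y 1 ^ α) * (ENNReal.ofReal (wt y s)) ^ 2
    = lw α (s 0) * lw α (s 1) := by
  have hw : Measurable fun y : Fin 2 → ℝ => wt y s := by
    have : Continuous fun y : Fin 2 → ℝ => wt y s := by fun_prop
    exact this.measurable
  rw [← lintegral_indicator isOpen_Q2.measurableSet, lintegral_fin2 (by
    apply Measurable.indicator _ isOpen_Q2.measurableSet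
    fun_prop)]
  set k : ℝ → ℝ → ℝ≥0∞ := fun r => (Ioi (0:ℝ)).indicator fun y => ENNReal.ofReal (y ^ α) * ENNReal.ofReal (Real.exp (-(4 * Real.pi * (y * r)))) with hk
  have hkm : ∀ r, Measurable (k r) := fun r => Measurable.indicator (by fun_prop) measurableSet_Ioi
  have hkl : ∀ r, ∫⁻ y, k r y = lw α r := fun r => by
    rw [hk, lintegral_indicator measurableSet_Ioi]; rfl
  rw [← hkl, ← hkl, ← lintegral_mul_const _ (hkm _)]
  refine lintegral_congr fun a => ?_
  rw [← lintegral_const_mul _ (hkm _)]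
  refine lintegral_congr fun b => ?_
  by_cases ha : 0 < a <;> by_cases hb : 0 < b <;> simp [hk, ha, hb, Q2, indicator, wt_sq_fin2]
  ring

theorem tonelli_berg (α : ℝ) {g : (Fin 2 → ℝ) → ℂ} (hg : Measurable g) :
    ∫⁻ y in Q2, ENNReal.ofReal (y 0 ^ α) * ENNReal.ofReal (y 1 ^ α) * ∫⁻ s, (ENNReal.ofReal (wt y s) * ‖g s‖ₑ) ^ 2
    = ∫⁻ s : Fin 2 → ℝ, lw α (s 0) * lw α (s 1) * ‖g s‖ₑ ^ 2 := by
  have hw : Measurable fun p : (Fin 2 → ℝ) × (Fin 2 → ℝ) => wt p.1 p.2 := by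
    have : Continuous fun p : (Fin 2 → ℝ) × (Fin 2 → ℝ) => wt p.1 p.2 := by fun_prop
    exact this.measurable
  have h1 : ∀ y : Fin 2 → ℝ, ENNReal.ofReal (y 0 ^ α) * ENNReal.ofReal (y 1 ^ α) * ∫⁻ s, (ENNReal.ofReal (wt y s) * ‖g s‖ₑ) ^ 2
      = ∫⁻ s, (ENNReal.ofReal (y 0 ^ α) * ENNReal.ofReal (y 1 ^ α) * (ENNReal.ofReal (wt y s)) ^ 2 * ‖g s‖ₑ ^ 2) := by
    intro y
    rw [← lintegral_const_mul' _ _ (ENNReal.mul_ne_top ENNReal.ofReal_ne_top ENNReal.ofReal_ne_top)]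
    refine lintegral_congr fun s => ?_
    ring
  simp only [h1]
  rw [lintegral_lintegral_swap]
  · refine lintegral_congr fun s => ?_
    rw [lintegral_mul_const' _ _ (by simp), lw_two]
  · apply Measurable.aemeasurable
    have h2 : Measurable fun p : (Fin 2 → ℝ) × (Fin 2 → ℝ) => ‖g p.2‖ₑ ^ 2 := (hg.comp measurable_snd).enorm.pow_const 2
    exact Measurable.mul (by fun_prop) h2

/-- join -/
def jn (s : Fin 2 → ℝ) (r : ℝ) : Fin 3 → ℝ := ![s 0, s 1, r]

theorem jn_eq (s : Fin 2 → ℝ) (r : ℝ) : jn s r = (MeasurableEquiv.piFinSuccAbove (fun _ : Fin 3 => ℝ) (Fin.last 2)).symm (r, s) := by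
  ext i
  fin_cases i <;> simp [jn, MeasurableEquiv.piFinSuccAbove, Fin.insertNthEquiv] <;> rfl

theorem jn_pres : MeasurePreserving (fun p : (Fin 2 → ℝ) × ℝ => jn p.1 p.2) (volume.prod volume) volume := by
  have h1 := (volume_preserving_piFinSuccAbove (fun _ : Fin 3 => ℝ) (Fin.last 2)).symm
  have h2 := h1.comp (Measure.measurePreserving_swap (μ := (volume : Measure (Fin 2 → ℝ))) (ν := (volume : Measure ℝ)))
  have e : (fun p : (Fin 2 → ℝ) × ℝ => jn p.1 p.2) =
      (MeasurableEquiv.piFinSuccAbove (fun _ : Fin 3 => ℝ) (Fin.last 2)).symm ∘ Prod.swap := by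
    ext1 p
    exact jn_eq _ _
  rw [e]
  exact h2

theorem jn_emb : MeasurableEmbedding (fun p : (Fin 2 → ℝ) × ℝ => jn p.1 p.2) := by
  have h2 := (MeasurableEquiv.piFinSuccAbove (fun _ : Fin 3 => ℝ) (Fin.last 2)).symm.measurableEmbedding.comp
    (MeasurableEquiv.prodComm (α := (Fin 2 → ℝ)) (β := ℝ)).measurableEmbedding
  convert h2 using 1
  ext1 p
  exact jn_eq _ _

theorem lintegral_fin3 {h : (Fin 3 → ℝ) → ℝ≥0∞} (hh : Measurable h) : ∫⁻ t, h t = ∫⁻ s, ∫⁻ r, h (jn s r) := by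
  rw [← jn_pres.lintegral_comp_emb jn_emb, lintegral_prod]
  exact (hh.comp jn_pres.measurable).aemeasurable

theorem integral_fin3 {h : (Fin 3 → ℝ) → ℂ} (hh : Integrable h) : ∫ t, h t = ∫ s, ∫ r, h (jn s r) ∧
    (Integrable fun s => ∫ r, h (jn s r)) ∧ ∀ᵐ s, Integrable fun r => h (jn s r) := by
  have h1 : Integrable (fun p : (Fin 2 → ℝ) × ℝ => h (jn p.1 p.2)) (volume.prod volume) := 
    (jn_pres.integrable_comp_emb jn_emb).2 hh
  refine ⟨?_, h1.integral_prod_left, h1.prod_right_ae⟩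
  rw [← jn_pres.integral_comp jn_emb, integral_prod _ h1]

theorem ae_fin3 {p : (Fin 3 → ℝ) → Prop} (h : ∀ᵐ t, p t) : ∀ᵐ s : Fin 2 → ℝ, ∀ᵐ r : ℝ, p (jn s r) :=
  Measure.ae_ae_of_ae_prod (jn_pres.quasiMeasurePreserving.ae h)

end PartW

section PartH1

open MeasureTheory Set Filter
open scoped ENNReal NNReal Topology


/-- closed dual cone -/
def KK : Set (Fin 3 → ℝ) := {t | 0 ≤ t 0 ∧ 0 ≤ t 1 ∧ t 2 ^ 2 ≤ 4 * (t 0 * t 1)}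

theorem rdot3 (y t : Fin 3 → ℝ) : rdot y t = y 0 * t 0 + y 1 * t 1 + y 2 * t 2 := by
  simp [rdot, Fin.sum_univ_three]

theorem dual_of {t : Fin 3 → ℝ} (h : ∀ y ∈ Sigma3, 0 ≤ rdot y t) : t ∈ KK := by
  have aux : ∀ a b : ℝ, (∀ δ > 0, 0 ≤ a + δ * b) → 0 ≤ a := by
    intro a b h
    by_contra hn
    push Not at hn
    have := h (-a / (2 * (|b| + 1))) (by apply div_pos <;> [linarith; positivity])
    have h2 : -a / (2 * (|b| + 1)) * b ≤ -a / 2 := by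
      have : -a / (2 * (|b| + 1)) * b ≤ -a / (2 * (|b| + 1)) * (|b| + 1) := by
        apply mul_le_mul_of_nonneg_left
        · linarith [le_abs_self b]
        · apply div_nonneg <;> [linarith; positivity]
      refine this.trans (le_of_eq ?_)
      have : |b| + 1 ≠ 0 := by positivity
      field_simp
    linarith
  have h0 : 0 ≤ t 0 := aux _ (t 1) fun δ hδ => by
    have := h _ (Sigma3_mem 1 δ one_pos hδ)
    rw [rdot3] at this
    simpa using this
  have h1 : 0 ≤ t 1 := aux _ (t 0) fun δ hδ => by
    have := h _ (Sigma3_mem δ 1 hδ one_pos)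
    rw [rdot3] at this
    simp at this
    linarith
  refine ⟨h0, h1, ?_⟩
  by_contra hcon
  push Not at hcon
  set gap := t 2 ^ 2 - 4 * (t 0 * t 1) with hgap
  have hg : 0 < gap := by linarith
  set S := t 0 + t 1 + 1 with hS
  have hSp : 0 < S := by positivity
  set ε := min 1 (gap / (8 * S)) with hε
  have he0 : 0 < ε := lt_min one_pos (by positivity)
  have he1 : ε ≤ 1 := min_le_left _ _
  have he2 : ε * (8 * S) ≤ gap := (le_div_iff₀ (by positivity)).1 (min_le_right _ _)
  set q := (t 0 + ε) * (t 1 + ε) with hq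
  have hqp : 0 < q := by positivity
  have hq2 : 4 * q < t 2 ^ 2 := by nlinarith
  have ht2 : 0 < t 2 ^ 2 := by linarith
  have ht20 : t 2 ≠ 0 := by rintro h; simp [h] at ht2
  have hy : (![2 * (t 1 + ε), 2 * (t 0 + ε), -(4 * q / t 2 ^ 2) * t 2] : Fin 3 → ℝ) ∈ Sigma3 := by
    refine ⟨?_, by simp; positivity⟩
    simp only [Matrix.cons_val]
    have e1 : 2 * (t 1 + ε) * (2 * (t 0 + ε)) = 4 * q := by rw [hq]; ring
    have e2 : (-(4 * q / t 2 ^ 2) * t 2) ^ 2 = 4 * q * (4 * q / t 2 ^ 2) := by field_simp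
    rw [e1, e2]
    have : 4 * q / t 2 ^ 2 < 1 := by rw [div_lt_one ht2]; exact hq2
    nlinarith
  have := h _ hy
  rw [rdot3] at this
  simp only [Matrix.cons_val] at this
  have e3 : -(4 * q / t 2 ^ 2) * t 2 * t 2 = -(4 * q) := by field_simp
  rw [e3, hq] at this
  nlinarith

theorem supp_ae {f : (Fin 3 → ℝ) → ℂ} (hf : Measurable f) {A : ℝ≥0∞} (hA : A < ⊤)
    (h : ∀ y ∈ Sigma3, ∫⁻ t, (ENNReal.ofReal (wt y t) * ‖f t‖ₑ) ^ 2 ≤ A) :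
    ∀ᵐ t, f t ≠ 0 → t ∈ KK := by
  have hwm : ∀ y : Fin 3 → ℝ, Measurable fun t => ENNReal.ofReal (wt y t) := by
    intro y
    have : Continuous fun t => wt y t := by fun_prop
    exact this.measurable.ennreal_ofReal
  have key : ∀ y ∈ Sigma3, ∀ᵐ t, f t ≠ 0 → 0 ≤ rdot y t := by
    intro y hy
    set u : ℕ → (Fin 3 → ℝ) → ℝ≥0∞ := fun n t => (ENNReal.ofReal (wt (((n:ℝ) + 1) • y) t) * ‖f t‖ₑ) ^ 2 with hu
    have um : ∀ n, Measurable (u n) := fun n => ((hwm _).mul hf.enorm).pow_const 2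
    have h1 : ∫⁻ t, liminf (fun n => u n t) atTop ≤ A := by
      refine (lintegral_liminf_le um).trans ?_
      refine (liminf_le_liminf (v := fun _ => A) (Eventually.of_forall fun n => ?_)).trans (by simp)
      exact h _ (Sigma3_smul hy (by positivity))
    have h2 := ae_lt_top (Measurable.liminf um) (h1.trans_lt hA).ne
    filter_upwards [h2] with t ht hft
    by_contra hneg
    push Not at hneg
    have hlim : Tendsto (fun n => u n t) atTop (𝓝 ⊤) := by
      have h3 : Tendsto (fun n : ℕ => wt (((n:ℝ) + 1) • y) t) atTop atTop := by
        simp only [wt, rdot_smul_left]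
        apply Real.tendsto_exp_atTop.comp
        have : (fun n : ℕ => -(2 * Real.pi * (((n:ℝ) + 1) * rdot y t))) = fun n : ℕ => ((n:ℝ) + 1) * (-(2 * Real.pi * rdot y t)) := by
          ext n; ring
        rw [this]
        refine Tendsto.atTop_mul_const (by have := Real.pi_pos; nlinarith) ?_
        exact tendsto_atTop_add_const_right _ _ tendsto_natCast_atTop_atTop
      have h4 : Tendsto (fun n : ℕ => ENNReal.ofReal (wt (((n:ℝ) + 1) • y) t)) atTop (𝓝 ⊤) := ENNReal.tendsto_ofReal_atTop.comp h3
      have h5 := ENNReal.Tendsto.mul_const (b := ‖f t‖ₑ) h4 (Or.inl (by simp))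
      rw [ENNReal.top_mul (by simpa using hft)] at h5
      have := ((ENNReal.continuous_pow 2).tendsto _).comp h5
      simpa [Function.comp_def] using this
    rw [hlim.liminf_eq] at ht
    exact lt_irrefl _ ht
  have hall : ∀ᵐ t, ∀ n, TopologicalSpace.denseSeq (Fin 3 → ℝ) n ∈ Sigma3 → f t ≠ 0 → 0 ≤ rdot (TopologicalSpace.denseSeq (Fin 3 → ℝ) n) t := by
    rw [ae_all_iff]
    intro n
    by_cases hn : TopologicalSpace.denseSeq (Fin 3 → ℝ) n ∈ Sigma3
    · filter_upwards [key _ hn] with t ht _ using ht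
    · exact Eventually.of_forall fun t h => absurd h hn
  filter_upwards [hall] with t ht hft
  apply dual_of
  intro y hy
  by_contra hneg
  push Not at hneg
  have ho : IsOpen (Sigma3 ∩ {y | rdot y t < 0}) := isOpen_Sigma3.inter (isOpen_lt (by fun_prop) (by fun_prop))
  obtain ⟨n, hn⟩ := (TopologicalSpace.denseRange_denseSeq (Fin 3 → ℝ)).exists_mem_open ho ⟨y, hy, hneg⟩
  exact absurd (ht n hn.1 hft) (not_le.2 hn.2)

theorem l2_le {f : (Fin 3 → ℝ) → ℂ} (hf : Measurable f) {A : ℝ≥0∞} 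
    (h : ∀ y ∈ Sigma3, ∫⁻ t, (ENNReal.ofReal (wt y t) * ‖f t‖ₑ) ^ 2 ≤ A) :
    ∫⁻ t, ‖f t‖ₑ ^ 2 ≤ A := by
  have hwm : ∀ y : Fin 3 → ℝ, Measurable fun t => ENNReal.ofReal (wt y t) := by
    intro y
    have : Continuous fun t => wt y t := by fun_prop
    exact this.measurable.ennreal_ofReal
  set y : Fin 3 → ℝ := ![1, 1, 0]
  have hy : y ∈ Sigma3 := Sigma3_mem 1 1 one_pos one_pos
  set u : ℕ → (Fin 3 → ℝ) → ℝ≥0∞ := fun n t => (ENNReal.ofReal (wt ((1 / ((n:ℝ) + 1)) • y) t) * ‖f t‖ₑ) ^ 2 with hu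
  have um : ∀ n, Measurable (u n) := fun n => ((hwm _).mul hf.enorm).pow_const 2
  calc ∫⁻ t, ‖f t‖ₑ ^ 2 = ∫⁻ t, liminf (fun n => u n t) atTop := by
        refine lintegral_congr fun t => ?_
        refine (Tendsto.liminf_eq ?_).symm
        have h0 : Tendsto (fun n : ℕ => wt ((1 / ((n:ℝ) + 1)) • y) t) atTop (𝓝 1) := by
          have hc : Continuous fun c : ℝ => wt (c • y) t := by fun_prop
          have := (hc.tendsto 0).comp (tendsto_one_div_add_atTop_nhds_zero_nat (𝕜 := ℝ))
          simpa [Function.comp_def, wt, rdot] using this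
        have h1 := ENNReal.tendsto_ofReal h0
        have h2 := ENNReal.Tendsto.mul_const (b := ‖f t‖ₑ) h1 (Or.inl (by simp))
        have := ((ENNReal.continuous_pow 2).tendsto _).comp h2
        simpa [Function.comp_def, hu] using this
    _ ≤ A := by
      refine (lintegral_liminf_le um).trans ?_
      refine (liminf_le_liminf (v := fun _ => A) (Eventually.of_forall fun n => ?_)).trans (by simp)
      exact h _ (Sigma3_smul hy (by positivity))

theorem cs_set {u : ℝ → ℝ≥0∞} (hu : Measurable u) (S : Set ℝ) :
    (∫⁻ r in S, u r) ^ 2 ≤ volume S * ∫⁻ r, u r ^ 2 := by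
  have h := ENNReal.lintegral_mul_le_Lp_mul_Lq (volume.restrict S) (p := 2) (q := 2) (by constructor <;> norm_num) 
    (f := fun _ => 1) (g := u) aemeasurable_const hu.aemeasurable
  simp only [Pi.mul_apply, one_mul, ENNReal.one_rpow, lintegral_const, Measure.restrict_apply MeasurableSet.univ, univ_inter] at h
  calc (∫⁻ r in S, u r) ^ 2 ≤ (volume S ^ (1 / 2 : ℝ) * (∫⁻ r in S, u r ^ (2:ℝ)) ^ (1 / 2 : ℝ)) ^ 2 := by gcongr
    _ = volume S * ∫⁻ r in S, u r ^ 2 := by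
        rw [mul_pow, ← ENNReal.rpow_natCast, ← ENNReal.rpow_mul, ← ENNReal.rpow_natCast, ← ENNReal.rpow_mul]
        simp
    _ ≤ _ := by gcongr; exact Measure.restrict_le_self

end PartH1

section PartH2

open MeasureTheory Set Filter
open scoped ENNReal NNReal Topology


theorem measurable_jn : Measurable fun p : (Fin 2 → ℝ) × ℝ => jn p.1 p.2 := jn_pres.measurable

theorem continuous_PP : Continuous PP := by unfold PP; fun_prop

theorem berg_exp (m : ℕ) : (-1:ℝ) < 2 * m - 1 / 2 := by
  have : (0:ℝ) ≤ m := Nat.cast_nonneg m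
  linarith

theorem rpow_split {q : ℝ} (hq : 0 < q) (m : ℕ) : q ^ ((2 * m - 1 / 2 : ℝ) + 1) = q ^ (2 * m) * √q := by
  rw [show ((2 * m - 1 / 2 : ℝ) + 1) = ((2 * m : ℕ) : ℝ) + 1 / 2 by push_cast; ring, Real.rpow_add hq, Real.rpow_natCast,
    Real.sqrt_eq_rpow]

theorem lw_prod {α : ℝ} (hα : -1 < α) : ∃ c : ℝ, 0 < c ∧ ∀ s : Fin 2 → ℝ, 0 < s 0 → 0 < s 1 → 
    lw α (s 0) * lw α (s 1) = ENNReal.ofReal (c * ((s 0 * s 1) ^ (α + 1))⁻¹) := by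
  obtain ⟨c, hc, h⟩ := lw_pos hα
  refine ⟨c * c, by positivity, fun s h0 h1 => ?_⟩
  rw [h _ h0, h _ h1, ← ENNReal.ofReal_mul (by positivity), Real.mul_rpow h0.le h1.le]
  congr 1
  rw [mul_inv]; ring

theorem fwd_pt (m : ℕ) : ∃ C : ℝ, 0 < C ∧ ∀ (f : (Fin 3 → ℝ) → ℂ), Measurable f → ∀ s : Fin 2 → ℝ,
    (∀ᵐ r : ℝ, f (jn s r) ≠ 0 → jn s r ∈ KK) →
    lw (2 * m - 1 / 2) (s 0) * lw (2 * m - 1 / 2) (s 1) * ‖∫ r : ℝ, (PP (jn s r) : ℂ) ^ m * f (jn s r)‖ₑ ^ 2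
      ≤ ENNReal.ofReal C * ∫⁻ r, ‖f (jn s r)‖ₑ ^ 2 := by
  obtain ⟨c, hc, hlw⟩ := lw_prod (berg_exp m)
  refine ⟨c * ((16 * Real.pi ^ 2) ^ (2 * m) * 4), by positivity, fun f hf s hs => ?_⟩
  by_cases hpos : 0 < s 0 ∧ 0 < s 1
  · obtain ⟨h0, h1⟩ := hpos
    rw [hlw s h0 h1]
    set q := s 0 * s 1 with hq
    have hqp : 0 < q := by positivity
    rw [rpow_split hqp]
    set R := 2 * √q with hR
    have hR0 : 0 < R := by positivity
    have hR2 : R ^ 2 = 4 * q := by rw [hR, mul_pow, Real.sq_sqrt hqp.le]; norm_num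
    have hfr : Measurable fun r => ‖f (jn s r)‖ₑ :=
      (hf.comp (measurable_jn.comp (measurable_const.prodMk measurable_id))).enorm
    have b1 : ‖∫ r : ℝ, (PP (jn s r) : ℂ) ^ m * f (jn s r)‖ₑ ≤ ENNReal.ofReal ((16 * Real.pi ^ 2 * q) ^ m) * ∫⁻ r in Icc (-R) R, ‖f (jn s r)‖ₑ := by
      refine (enorm_integral_le_lintegral_enorm _).trans ?_
      rw [← lintegral_const_mul' _ _ ENNReal.ofReal_ne_top, ← lintegral_indicator measurableSet_Icc]
      refine lintegral_mono_ae ?_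
      filter_upwards [hs] with r hr
      by_cases hf0 : f (jn s r) = 0
      · simp [hf0]
      · have hK := (hr hf0).2.2
        simp [jn] at hK
        rw [← hq, ← hR2] at hK
        have hmem : r ∈ Icc (-R) R := abs_le.1 (abs_le_of_sq_le_sq hK hR0.le)
        rw [indicator_of_mem hmem, enorm_mul]
        gcongr
        rw [← ofReal_norm, norm_pow, Complex.norm_real, Real.norm_eq_abs]
        apply ENNReal.ofReal_le_ofReal
        gcongr
        simp only [PP, jn, Matrix.cons_val]
        rw [hR2] at hK
        have e : 4 * s 0 * s 1 = 4 * q := by rw [hq]; ring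
        rw [e, abs_of_nonneg (mul_nonneg (by positivity) (by linarith))]
        have := Real.pi_pos
        have : 0 ≤ Real.pi ^ 2 * r ^ 2 := by positivity
        nlinarith
    have b2 : ‖∫ r : ℝ, (PP (jn s r) : ℂ) ^ m * f (jn s r)‖ₑ ^ 2 ≤ 
        ENNReal.ofReal ((16 * Real.pi ^ 2 * q) ^ (2 * m) * (4 * √q)) * ∫⁻ r, ‖f (jn s r)‖ₑ ^ 2 := by
      calc _ ≤ (ENNReal.ofReal ((16 * Real.pi ^ 2 * q) ^ m) * ∫⁻ r in Icc (-R) R, ‖f (jn s r)‖ₑ) ^ 2 := by gcongr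
        _ = ENNReal.ofReal ((16 * Real.pi ^ 2 * q) ^ (2 * m)) * (∫⁻ r in Icc (-R) R, ‖f (jn s r)‖ₑ) ^ 2 := by
            rw [mul_pow, ← ENNReal.ofReal_pow (by positivity)]; ring_nf
        _ ≤ ENNReal.ofReal ((16 * Real.pi ^ 2 * q) ^ (2 * m)) * (volume (Icc (-R) R) * ∫⁻ r, ‖f (jn s r)‖ₑ ^ 2) := by
            gcongr; exact cs_set hfr _
        _ = _ := by
            rw [Real.volume_Icc, ← mul_assoc, ← ENNReal.ofReal_mul (by positivity)]
            congr 3; rw [hR]; ring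
    calc _ ≤ ENNReal.ofReal (c * (q ^ (2 * m) * √q)⁻¹) * (ENNReal.ofReal ((16 * Real.pi ^ 2 * q) ^ (2 * m) * (4 * √q)) * ∫⁻ r, ‖f (jn s r)‖ₑ ^ 2) := by gcongr
      _ = _ := by
        rw [← mul_assoc, ← ENNReal.ofReal_mul (by positivity)]
        congr 2
        have : √q ≠ 0 := by positivity
        rw [mul_pow (16 * Real.pi ^ 2) q]
        clear_value q
        have : q ≠ 0 := hqp.ne'
        field_simp
  · have : ∀ᵐ r : ℝ, f (jn s r) = 0 := by
      filter_upwards [hs, compl_mem_ae_iff.2 (measure_singleton (0:ℝ))] with r hr hr0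
      by_contra hf0
      obtain ⟨k0, k1, k2⟩ := hr hf0
      simp only [jn, Matrix.cons_val] at k0 k1 k2
      have hr2 : 0 < r ^ 2 := by
        have : r ≠ 0 := hr0
        positivity
      apply hpos
      constructor
      · rcases k0.eq_or_lt with h | h
        · rw [← h] at k2; linarith
        · exact h
      · rcases k1.eq_or_lt with h | h
        · rw [← h] at k2; linarith
        · exact h
    have : ∫ r : ℝ, (PP (jn s r) : ℂ) ^ m * f (jn s r) = 0 := by
      rw [integral_eq_zero_of_ae]
      filter_upwards [this] with r hr
      simp [hr]
    simp [this]

theorem wt_jn (a b : ℝ) (s : Fin 2 → ℝ) (r : ℝ) : wt ![a, b, 0] (jn s r) = wt ![a, b] s := by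
  simp [wt, rdot, Fin.sum_univ_three, Fin.sum_univ_two, jn]

theorem dotc_jn (a b : ℂ) (s : Fin 2 → ℝ) (r : ℝ) : dotc ![a, b, 0] (jn s r) = dotc ![a, b] s := by
  simp [dotc, Fin.sum_univ_three, Fin.sum_univ_two, jn]

theorem mem_TSigma_zero {a b : ℂ} (ha : 0 < a.im) (hb : 0 < b.im) : (![a, b, 0] : Fin 3 → ℂ) ∈ TSigma := by
  refine ⟨?_, ?_⟩
  · simp; positivity
  · simpa

/-- the restricted density -/
theorem FLT_restrict {h : (Fin 3 → ℝ) → ℂ} (hm : Measurable h) (ha : Adm Sigma3 h) :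
    Measurable (fun s : Fin 2 → ℝ => ∫ r, h (jn s r)) ∧ Adm Q2 (fun s => ∫ r, h (jn s r)) ∧ 
    ∀ a b : ℂ, 0 < a.im → 0 < b.im → FLT h ![a, b, 0] = FLT (fun s => ∫ r, h (jn s r)) ![a, b] := by
  have gm : Measurable (fun s : Fin 2 → ℝ => ∫ r, h (jn s r)) :=
    (StronglyMeasurable.integral_prod_right' (f := fun p : (Fin 2 → ℝ) × ℝ => h (jn p.1 p.2))
      (hm.comp measurable_jn).stronglyMeasurable).measurable
  refine ⟨gm, ⟨gm.aestronglyMeasurable, fun y hy => ?_⟩, fun a b ha' hb' => ?_⟩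
  · have h1 := (integral_fin3 (ha.2 _ (Sigma3_mem _ _ hy.1 hy.2))).2.1
    refine h1.congr (Eventually.of_forall fun s => ?_)
    simp only [wt_jn, integral_const_mul]
    have : (![y 0, y 1] : Fin 2 → ℝ) = y := by ext i; fin_cases i <;> rfl
    rw [this]
  · have h1 := integral_fin3 (integrable_exp_dotc ha.1 (ha.2 _ (mem_TSigma_zero ha' hb')))
    unfold FLT
    rw [h1.1]
    congr 1; ext s
    simp only [dotc_jn, integral_const_mul]

theorem FLT_differentiableOn_pair {g : (Fin 2 → ℝ) → ℂ} (h : Adm Q2 g) :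
    DifferentiableOn ℂ (fun p : ℂ × ℂ => FLT g ![p.1, p.2]) (UHP ×ˢ UHP) := by
  intro p hp
  have hz : (![p.1, p.2] : Fin 2 → ℂ) ∈ tube Q2 := ⟨hp.1, hp.2⟩
  have h1 := (h.FD isOpen_Q2 hz).1
  have h2 : DifferentiableAt ℂ (fun p : ℂ × ℂ => (![p.1, p.2] : Fin 2 → ℂ)) p := by
    rw [differentiableAt_pi]
    intro i
    fin_cases i
    · exact differentiableAt_fst
    · exact differentiableAt_snd
  exact (DifferentiableAt.comp p h1 h2).differentiableWithinAt

theorem berg_FLT_le (α : ℝ) {g : (Fin 2 → ℝ) → ℂ} (hg : Measurable g) (h : Adm Q2 g) :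
    bergNormSqProd α α (fun p => FLT g ![p.1, p.2]) ≤ ∫⁻ s : Fin 2 → ℝ, lw α (s 0) * lw α (s 1) * ‖g s‖ₑ ^ 2 := by
  rw [berg_eq α (FLT_differentiableOn_pair h).continuousOn, ← tonelli_berg α hg]
  refine setLIntegral_mono_ae' isOpen_Q2.measurableSet (Eventually.of_forall fun y hy => ?_)
  refine mul_le_mul' le_rfl ?_
  have hp := plancherel_pos _ (h.2 y hy)
  calc _ = ∫⁻ x : Fin 2 → ℝ, (‖FLT (fun t => (wt y t : ℂ) * g t) (fun i => ((x i : ℝ) : ℂ))‖₊ : ℝ≥0∞) ^ 2 := by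
        refine lintegral_congr fun x => ?_
        rw [← FLT_cx, enorm_eq_nnnorm]
        congr 5
        ext i; fin_cases i <;> rfl
    _ ≤ _ := hp
    _ = _ := by
        refine lintegral_congr fun t => ?_
        rw [← enorm_eq_nnnorm, enorm_mul, ← ofReal_norm (wt y t : ℂ), Complex.norm_of_nonneg (wt_pos _ _).le]

theorem berg_congr (α : ℝ) {G G' : ℂ × ℂ → ℂ} (h : EqOn G G' (UHP ×ˢ UHP)) : bergNormSqProd α α G = bergNormSqProd α α G' := by
  unfold bergNormSqProd Vm
  apply lintegral_congr_ae
  have hd : Measurable fun z : ℂ => ENNReal.ofReal (z.im ^ α) := by fun_prop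
  rw [prod_withDensity hd hd, Measure.prod_restrict]
  refine (withDensity_absolutelyContinuous _ _).ae_le ?_
  filter_upwards [ae_restrict_mem (isOpen_UHP.measurableSet.prod isOpen_UHP.measurableSet)] with z hz
  rw [h hz]

theorem fwd (m : ℕ) : ∃ C : ℝ, 0 < C ∧ ∀ F : (Fin 3 → ℂ) → ℂ, DifferentiableOn ℂ F TSigma → hardyNormSqSigma F < ⊤ →
    DifferentiableOn ℂ (fun p : ℂ × ℂ => BoxS^[m] F ![p.1, p.2, 0]) (UHP ×ˢ UHP) ∧
    bergNormSqProd (2 * m - 1 / 2) (2 * m - 1 / 2) (fun p : ℂ × ℂ => BoxS^[m] F ![p.1, p.2, 0]) ≤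
      ENNReal.ofReal C * hardyNormSqSigma F := by
  obtain ⟨C, hC, hpt⟩ := fwd_pt m
  refine ⟨C, hC, fun F hF hA => ?_⟩
  have hle : ∀ y ∈ Sigma3, ∫⁻ x, ‖F (cx x y)‖ₑ ^ 2 ≤ hardyNormSqSigma F := fun y hy =>
    le_iSup₂ (f := fun y (_ : y ∈ Sigma3) => ∫⁻ x, ‖F (cx x y)‖ₑ ^ 2) y hy
  obtain ⟨f, fm, fb, -, fF⟩ := PW2 isOpen_Sigma3 convex_Sigma3 ⟨_, Sigma3_mem 1 1 one_pos one_pos⟩ hF (by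
    intro y hy v hv
    refine ⟨_, hA, fun s hs => hle _ ?_⟩
    have := convex_Sigma3.add_smul_sub_mem hy hv hs
    simpa using this)
  have fb' : ∀ y ∈ Sigma3, ∫⁻ t, (ENNReal.ofReal (wt y t) * ‖f t‖ₑ) ^ 2 ≤ hardyNormSqSigma F :=
    fun y hy => (fb y hy).trans (hle y hy)
  have hadm : Adm Sigma3 f := ⟨fm.aestronglyMeasurable, fun y hy =>
    integrable_of_L2 isOpen_Sigma3 fm.aestronglyMeasurable (fun y hy => (fb' y hy).trans_lt hA) hy⟩
  obtain ⟨hadm2, hbox⟩ := BoxS_iter hadm (fun z hz => fF z hz) m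
  set h : (Fin 3 → ℝ) → ℂ := fun t => (PP t : ℂ) ^ m * f t with hh
  have hhm : Measurable h := by
    have : Continuous fun t : Fin 3 → ℝ => (PP t : ℂ) ^ m := by have := continuous_PP; fun_prop
    exact this.measurable.mul fm.measurable
  obtain ⟨gm, ga, gF⟩ := FLT_restrict hhm hadm2
  set g : (Fin 2 → ℝ) → ℂ := fun s => ∫ r, h (jn s r) with hg
  have heq : EqOn (fun p : ℂ × ℂ => BoxS^[m] F ![p.1, p.2, 0]) (fun p => FLT g ![p.1, p.2]) (UHP ×ˢ UHP) := by
    intro p hp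
    simp only
    rw [hbox (mem_TSigma_zero hp.1 hp.2), gF _ _ hp.1 hp.2]
  refine ⟨(FLT_differentiableOn_pair ga).congr heq, ?_⟩
  rw [berg_congr _ heq]
  refine (berg_FLT_le _ gm ga).trans ?_
  have hsupp := ae_fin3 (supp_ae fm.measurable hA fb')
  calc _ ≤ ∫⁻ s, ENNReal.ofReal C * ∫⁻ r, ‖f (jn s r)‖ₑ ^ 2 := by
        refine lintegral_mono_ae ?_
        filter_upwards [hsupp] with s hs
        exact hpt f fm.measurable s hs
    _ = ENNReal.ofReal C * ∫⁻ t, ‖f t‖ₑ ^ 2 := by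
        rw [lintegral_const_mul' _ _ ENNReal.ofReal_ne_top, lintegral_fin3 (fm.measurable.enorm.pow_const 2)]
    _ ≤ _ := by
        gcongr
        exact l2_le fm.measurable fb'

end PartH2

section PartH3

open MeasureTheory Set Filter
open scoped ENNReal NNReal Topology


theorem circle_mean {g : ℂ → ℂ} {w : ℂ} {ρ r : ℝ} (hg : DifferentiableOn ℂ g (Metric.ball w ρ)) (hr : 0 < r) (hrρ : r < ρ) :
    ENNReal.ofReal (2 * Real.pi) * ‖g w‖ₑ ^ 2 ≤ ∫⁻ θ in Ioo (-Real.pi) Real.pi, ‖g (circleMap w r θ)‖ₑ ^ 2 := by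
  have hd : DiffContOnCl ℂ (fun z => g z ^ 2) (Metric.ball w |r|) := by
    rw [abs_of_pos hr]
    exact (hg.pow 2).diffContOnCl_ball (Metric.closedBall_subset_ball hrρ)
  have h1 := hd.circleAverage
  rw [Real.circleAverage_def] at h1
  have hper : Function.Periodic (fun θ => g (circleMap w r θ) ^ 2) (2 * Real.pi) := fun θ => by
    simp only [periodic_circleMap w r θ]
  have h2 := hper.intervalIntegral_add_eq 0 (-Real.pi)
  rw [zero_add, show -Real.pi + 2 * Real.pi = Real.pi by ring] at h2
  rw [h2, inv_smul_eq_iff₀ (by positivity)] at h1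
  have hpi := Real.pi_pos
  rw [intervalIntegral.integral_of_le (by linarith), integral_Ioc_eq_integral_Ioo] at h1
  have h3 := congrArg (fun z : ℂ => ‖z‖ₑ) h1
  calc _ = ‖(2 * Real.pi) • g w ^ 2‖ₑ := by
        rw [enorm_smul, enorm_pow, Real.enorm_of_nonneg (by positivity)]
    _ ≤ _ := by
        rw [← h3]
        refine (enorm_integral_le_lintegral_enorm _).trans (le_of_eq ?_)
        simp only [enorm_pow]

theorem disc_mean {g : ℂ → ℂ} {w : ℂ} {ρ : ℝ} (hρ : 0 < ρ) (hg : DifferentiableOn ℂ g (Metric.ball w ρ)) :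
    ENNReal.ofReal (Real.pi * ρ ^ 2) * ‖g w‖ₑ ^ 2 ≤ ∫⁻ z in Metric.ball w ρ, ‖g z‖ₑ ^ 2 := by
  classical
  set N : ℂ → ℝ≥0∞ := (Metric.ball w ρ).indicator fun z => ‖g z‖ₑ ^ 2 with hN
  have hNm : Measurable N := by
    have h1 : Measurable ((Metric.ball w ρ).indicator g) := by
      have := hg.continuousOn.measurable_piecewise (g := 0) continuousOn_const Metric.isOpen_ball.measurableSet
      rwa [piecewise_eq_indicator] at this
    have : N = fun z => ‖(Metric.ball w ρ).indicator g z‖ₑ ^ 2 := by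
      ext z
      by_cases hz : z ∈ Metric.ball w ρ <;> simp [hz, hN]
    rw [this]
    exact h1.enorm.pow_const 2
  rw [← lintegral_indicator Metric.isOpen_ball.measurableSet, ← lintegral_add_left_eq_self _ w,
    ← Complex.lintegral_comp_polarCoord_symm, polarCoord_target, Measure.volume_eq_prod, ← Measure.prod_restrict]
  have hc : ∀ p : ℝ × ℝ, w + Complex.polarCoord.symm p = circleMap w p.1 p.2 := by
    intro p
    rw [Complex.polarCoord_symm_apply, circleMap, Complex.exp_mul_I, Complex.ofReal_cos, Complex.ofReal_sin]
  simp only [hc, smul_eq_mul]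
  have hcm : Measurable fun p : ℝ × ℝ => circleMap w p.1 p.2 := by
    have : Continuous fun p : ℝ × ℝ => circleMap w p.1 p.2 := by unfold circleMap; fun_prop
    exact this.measurable
  rw [lintegral_prod _ (by
    apply Measurable.aemeasurable
    exact Measurable.mul (by fun_prop) (hNm.comp hcm))]
  calc _ = ∫⁻ r in Ioo 0 ρ, ENNReal.ofReal r * (ENNReal.ofReal (2 * Real.pi) * ‖g w‖ₑ ^ 2) := by
        rw [lintegral_mul_const _ (by fun_prop), ← mul_assoc]
        congr 1
        rw [← ofReal_integral_eq_lintegral_ofReal]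
        · rw [← ENNReal.ofReal_mul' (by positivity), ← integral_Ioc_eq_integral_Ioo, ← intervalIntegral.integral_of_le hρ.le, integral_id]
          congr 1; ring
        · exact (continuous_id.integrableOn_Icc (a := 0) (b := ρ)).mono_set Ioo_subset_Icc_self
        · filter_upwards [ae_restrict_mem measurableSet_Ioo] with r hr using hr.1.le
    _ ≤ ∫⁻ r in Ioo 0 ρ, ∫⁻ θ in Ioo (-Real.pi) Real.pi, ENNReal.ofReal r * N (circleMap w r θ) := by
        refine setLIntegral_mono_ae' measurableSet_Ioo (Eventually.of_forall fun r hr => ?_)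
        rw [lintegral_const_mul' _ _ ENNReal.ofReal_ne_top]
        refine mul_le_mul' le_rfl ?_
        refine (circle_mean hg hr.1 hr.2).trans (le_of_eq ?_)
        refine lintegral_congr fun θ => ?_
        have : circleMap w r θ ∈ Metric.ball w ρ := by
          rw [Metric.mem_ball, dist_eq_norm, circleMap_sub_center, norm_circleMap_zero, abs_of_pos hr.1]; exact hr.2
        rw [hN, indicator_of_mem this]
    _ ≤ _ := lintegral_mono_set Ioo_subset_Ioi_self

theorem bidisc_mean {G : ℂ × ℂ → ℂ} {w : ℂ × ℂ} {ρ : ℝ} (hρ : 0 < ρ) (hG : DifferentiableOn ℂ G (Metric.ball w.1 ρ ×ˢ Metric.ball w.2 ρ)) :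
    ENNReal.ofReal (Real.pi * ρ ^ 2) * (ENNReal.ofReal (Real.pi * ρ ^ 2) * ‖G w‖ₑ ^ 2) ≤
      ∫⁻ z₁ in Metric.ball w.1 ρ, ∫⁻ z₂ in Metric.ball w.2 ρ, ‖G (z₁, z₂)‖ₑ ^ 2 := by
  have h1 := disc_mean (g := fun z => G (z, w.2)) (w := w.1) hρ (by
    refine hG.comp (by fun_prop) fun z hz => ⟨hz, Metric.mem_ball_self hρ⟩)
  refine (mul_le_mul' le_rfl h1).trans ?_
  rw [← lintegral_const_mul' _ _ ENNReal.ofReal_ne_top]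
  refine setLIntegral_mono_ae' Metric.isOpen_ball.measurableSet (Eventually.of_forall fun z hz => ?_)
  exact disc_mean (g := fun u => G (z, u)) (w := w.2) hρ (by
    refine hG.comp (by fun_prop) fun u hu => ⟨hz, hu⟩)

theorem slice_bound (α : ℝ) {G : ℂ × ℂ → ℂ} (hG : DifferentiableOn ℂ G (UHP ×ˢ UHP)) (hA : bergNormSqProd α α G < ⊤) {ρ M : ℝ} (hρ : 0 < ρ) (hM : ρ ≤ M) :
    ∃ C < (⊤ : ℝ≥0∞), ∀ y : Fin 2 → ℝ, (∀ i, 2 * ρ ≤ y i) → (∀ i, y i + ρ ≤ M) →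
      ∫⁻ x : Fin 2 → ℝ, ‖G (x 0 + y 0 * Complex.I, x 1 + y 1 * Complex.I)‖ₑ ^ 2 ≤ C := by
  classical
  set S : Set ℂ := {z | ρ ≤ z.im ∧ z.im ≤ M} with hS
  have hSm : MeasurableSet S := (measurableSet_le measurable_const Complex.measurable_im).inter (measurableSet_le Complex.measurable_im measurable_const)
  have hSU : S ⊆ UHP := fun z hz => lt_of_lt_of_le hρ hz.1
  set N : ℂ × ℂ → ℝ≥0∞ := (S ×ˢ S).indicator fun z => ‖G z‖ₑ ^ 2 with hN
  have hNm : Measurable N := by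
    have h1 : Measurable ((S ×ˢ S).indicator G) := by
      have := (hG.continuousOn.mono (prod_mono hSU hSU)).measurable_piecewise (g := 0) continuousOn_const (hSm.prod hSm)
      rwa [piecewise_eq_indicator] at this
    have : N = fun z => ‖(S ×ˢ S).indicator G z‖ₑ ^ 2 := by
      ext z
      by_cases hz : z ∈ S ×ˢ S <;> simp [hz, hN]
    rw [this]
    exact h1.enorm.pow_const 2
  -- lower bound on weights
  obtain ⟨κ, hκ, hκ'⟩ : ∃ κ > 0, ∀ t ∈ Icc ρ M, κ ≤ t ^ α := by
    have hcont : ContinuousOn (fun t : ℝ => t ^ α) (Icc ρ M) := fun t ht =>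
      (Real.continuousAt_rpow_const t α (Or.inl (lt_of_lt_of_le hρ ht.1).ne')).continuousWithinAt
    obtain ⟨t, ht, hmin⟩ := isCompact_Icc.exists_isMinOn (nonempty_Icc.2 hM) hcont
    exact ⟨t ^ α, Real.rpow_pos_of_pos (lt_of_lt_of_le hρ ht.1) α, fun u hu => hmin hu⟩
  have hNb : ENNReal.ofReal κ * ENNReal.ofReal κ * ∫⁻ p, N p ≤ bergNormSqProd α α G := by
    have hd : Measurable fun z : ℂ => ENNReal.ofReal (z.im ^ α) := by fun_prop
    have hd2 : Measurable fun z : ℂ × ℂ => ENNReal.ofReal (z.1.im ^ α) * ENNReal.ofReal (z.2.im ^ α) :=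
      (hd.comp measurable_fst).mul (hd.comp measurable_snd)
    unfold bergNormSqProd Vm
    rw [prod_withDensity hd hd, Measure.prod_restrict, lintegral_withDensity_eq_lintegral_mul_non_measurable₀ _ hd2.aemeasurable
      (Eventually.of_forall fun _ => ENNReal.mul_lt_top ENNReal.ofReal_lt_top ENNReal.ofReal_lt_top)]
    rw [hN, lintegral_indicator (hSm.prod hSm), ← lintegral_const_mul' _ _ (ENNReal.mul_ne_top ENNReal.ofReal_ne_top ENNReal.ofReal_ne_top)]
    refine le_trans ?_ (lintegral_mono_set (prod_mono hSU hSU))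
    refine setLIntegral_mono_ae' (hSm.prod hSm) (Eventually.of_forall fun z hz => ?_)
    simp only [Pi.mul_apply]
    refine mul_le_mul' (mul_le_mul' ?_ ?_) le_rfl
    · exact ENNReal.ofReal_le_ofReal (hκ' _ hz.1)
    · exact ENNReal.ofReal_le_ofReal (hκ' _ hz.2)
  have hNfin : ∫⁻ p, N p < ⊤ := by
    by_contra hcon
    rw [not_lt, top_le_iff] at hcon
    rw [hcon, ENNReal.mul_top (by simp [hκ])] at hNb
    exact absurd hA (not_lt.2 hNb)
  set c := ENNReal.ofReal (Real.pi * ρ ^ 2) with hc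
  have hc0 : c ≠ 0 := by
    have : 0 < Real.pi * ρ ^ 2 := by positivity
    simpa [hc] using this
  have hct : c ≠ ⊤ := ENNReal.ofReal_ne_top
  refine ⟨(c * c)⁻¹ * ((ENNReal.ofReal (2 * ρ) * ENNReal.ofReal (2 * ρ)) * ∫⁻ p, N p), 
    ENNReal.mul_lt_top (ENNReal.inv_lt_top.2 (by positivity)) (ENNReal.mul_lt_top (by finiteness) hNfin), fun y hy1 hy2 => ?_⟩
  have hcc0 : c * c ≠ 0 := mul_ne_zero hc0 hc0
  have hcct : c * c ≠ ⊤ := ENNReal.mul_ne_top hct hct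
  rw [← ENNReal.mul_le_iff_le_inv hcc0 hcct, ← lintegral_const_mul' _ _ hcct]
  set D : Set ((Fin 2 → ℝ) × (ℂ × ℂ)) := {q | dist q.2.1 ((q.1 0 : ℂ) + y 0 * Complex.I) < ρ ∧ dist q.2.2 ((q.1 1 : ℂ) + y 1 * Complex.I) < ρ} with hD
  have hDm : MeasurableSet D := by
    apply IsOpen.measurableSet
    have d1 : Continuous fun q : (Fin 2 → ℝ) × (ℂ × ℂ) => dist q.2.1 ((q.1 0 : ℂ) + y 0 * Complex.I) := by fun_prop
    have d2 : Continuous fun q : (Fin 2 → ℝ) × (ℂ × ℂ) => dist q.2.2 ((q.1 1 : ℂ) + y 1 * Complex.I) := by fun_prop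
    exact (isOpen_lt d1 continuous_const).inter (isOpen_lt d2 continuous_const)
  have hball : ∀ (t s : ℝ), 2 * ρ ≤ s → s + ρ ≤ M → Metric.ball ((t : ℂ) + s * Complex.I) ρ ⊆ S := by
    intro t s h1 h2 z hz
    have := (Complex.abs_im_le_norm (z - (t + s * Complex.I))).trans_lt (by simpa [dist_eq_norm] using hz)
    simp at this
    rw [abs_lt] at this
    exact ⟨by linarith, by linarith⟩
  calc _ ≤ ∫⁻ x : Fin 2 → ℝ, ∫⁻ p, D.indicator 1 (x, p) * N p := by
        refine lintegral_mono fun x => ?_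
        have hb0 := hball (x 0) (y 0) (hy1 0) (hy2 0)
        have hb1 := hball (x 1) (y 1) (hy1 1) (hy2 1)
        have h1 := bidisc_mean (w := ((x 0 : ℂ) + y 0 * Complex.I, (x 1 : ℂ) + y 1 * Complex.I)) hρ
          (hG.mono (prod_mono (hb0.trans hSU) (hb1.trans hSU)))
        simp only at h1 ⊢
        rw [mul_assoc]
        refine h1.trans (le_of_eq ?_)
        rw [Measure.volume_eq_prod, lintegral_prod, ← lintegral_indicator Metric.isOpen_ball.measurableSet]
        · refine lintegral_congr fun z₁ => ?_
          by_cases hz : z₁ ∈ Metric.ball ((x 0 : ℂ) + y 0 * Complex.I) ρ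
          · rw [indicator_of_mem hz, ← lintegral_indicator Metric.isOpen_ball.measurableSet]
            refine lintegral_congr fun z₂ => ?_
            by_cases hz2 : z₂ ∈ Metric.ball ((x 1 : ℂ) + y 1 * Complex.I) ρ
            · have hq : (x, (z₁, z₂)) ∈ D := ⟨hz, hz2⟩
              have hq2 : (z₁, z₂) ∈ S ×ˢ S := ⟨hb0 hz, hb1 hz2⟩
              rw [indicator_of_mem hz2, indicator_of_mem hq, hN, indicator_of_mem hq2]
              simp
            · have hq : (x, (z₁, z₂)) ∉ D := fun h => hz2 h.2
              rw [indicator_of_notMem hz2, indicator_of_notMem hq, zero_mul]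
          · rw [indicator_of_notMem hz]
            symm
            rw [← lintegral_zero (μ := (volume : Measure ℂ))]
            refine lintegral_congr fun z₂ => ?_
            have hq : (x, (z₁, z₂)) ∉ D := fun h => hz h.1
            rw [indicator_of_notMem hq, zero_mul]
        · apply Measurable.aemeasurable
          exact ((measurable_one.indicator hDm).comp (measurable_const.prodMk measurable_id)).mul hNm
    _ = ∫⁻ p, ∫⁻ x : Fin 2 → ℝ, D.indicator 1 (x, p) * N p := by
        rw [lintegral_lintegral_swap]
        apply Measurable.aemeasurable
        exact (measurable_one.indicator hDm).mul (hNm.comp measurable_snd)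
    _ ≤ ∫⁻ p, (ENNReal.ofReal (2 * ρ) * ENNReal.ofReal (2 * ρ)) * N p := by
        refine lintegral_mono fun p => ?_
        simp only
        have hm1 : Measurable fun x : Fin 2 → ℝ => D.indicator (1 : (Fin 2 → ℝ) × (ℂ × ℂ) → ℝ≥0∞) (x, p) :=
          (measurable_one.indicator hDm).comp (measurable_id.prodMk measurable_const)
        rw [lintegral_mul_const _ hm1]
        refine mul_le_mul' ?_ le_rfl
        set B : Set (Fin 2 → ℝ) := Set.pi univ ![Ioo (p.1.re - ρ) (p.1.re + ρ), Ioo (p.2.re - ρ) (p.2.re + ρ)] with hB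
        have hBm : MeasurableSet B := by
          refine MeasurableSet.univ_pi fun i => ?_
          fin_cases i <;> exact measurableSet_Ioo
        have hBv : volume B = ENNReal.ofReal (2 * ρ) * ENNReal.ofReal (2 * ρ) := by
          rw [hB, volume_pi_pi, Fin.prod_univ_two]
          simp only [Matrix.cons_val, Real.volume_Ioo]
          congr 2 <;> ring
        rw [← hBv, ← lintegral_indicator_one hBm]
        refine lintegral_mono fun x => ?_
        by_cases hx : (x, p) ∈ D
        · have : x ∈ B := by
            intro i _
            have aux : ∀ (z : ℂ) (t s : ℝ), dist z (t + s * Complex.I) < ρ → t ∈ Ioo (z.re - ρ) (z.re + ρ) := by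
              intro z t s h
              have := (Complex.abs_re_le_norm (z - (t + s * Complex.I))).trans_lt (by simpa [dist_eq_norm] using h)
              simp at this
              rw [abs_lt] at this
              exact ⟨by linarith, by linarith⟩
            fin_cases i
            · exact aux _ _ _ hx.1
            · exact aux _ _ _ hx.2
          rw [indicator_of_mem this, indicator_of_mem hx]; rfl
        · rw [indicator_of_notMem hx]; exact bot_le
    _ = _ := lintegral_const_mul' _ _ (by finiteness)

end PartH3

section PartH4

open MeasureTheory Set Filter
open scoped ENNReal NNReal Topology


theorem convex_Q2 : Convex ℝ Q2 := by
  have : Q2 = {y | 0 < y 0} ∩ {y | 0 < y 1} := rfl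
  rw [this]
  exact (convex_halfSpace_gt (f := fun y : Fin 2 → ℝ => y 0) ⟨fun _ _ => rfl, fun _ _ => rfl⟩ 0).inter
    (convex_halfSpace_gt (f := fun y : Fin 2 → ℝ => y 1) ⟨fun _ _ => rfl, fun _ _ => rfl⟩ 0)

/-- Paley–Wiener for the Bergman space -/
theorem berg_PW {α : ℝ} {G : ℂ × ℂ → ℂ} (hG : DifferentiableOn ℂ G (UHP ×ˢ UHP)) (hA : bergNormSqProd α α G < ⊤) :
    ∃ g : (Fin 2 → ℝ) → ℂ, Measurable g ∧ ∫⁻ s : Fin 2 → ℝ, lw α (s 0) * lw α (s 1) * ‖g s‖ₑ ^ 2 ≤ bergNormSqProd α α G ∧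
      ∀ a b : ℂ, 0 < a.im → 0 < b.im → G (a, b) = FLT g ![a, b] := by
  obtain ⟨g, gm, gb, -, gF⟩ := PW2 (F := fun z : Fin 2 → ℂ => G (z 0, z 1)) isOpen_Q2 convex_Q2 ⟨![1, 1], by simp [Q2]⟩
    (by refine hG.comp (by fun_prop) fun z hz => ⟨hz.1, hz.2⟩) (by
      intro y hy v hv
      obtain ⟨y0, y1⟩ := hy
      obtain ⟨v0, v1⟩ := hv
      simp only [Pi.add_apply] at v0 v1
      set ρ := min (min (y 0) (y 1)) (min (y 0 + v 0) (y 1 + v 1)) / 2 with hρ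
      have hm : 2 * ρ = min (min (y 0) (y 1)) (min (y 0 + v 0) (y 1 + v 1)) := by rw [hρ]; ring
      have hρ0 : 0 < ρ := by rw [hρ]; positivity
      have m0 : 2 * ρ ≤ y 0 := by rw [hm]; exact (min_le_left _ _).trans (min_le_left _ _)
      have m1 : 2 * ρ ≤ y 1 := by rw [hm]; exact (min_le_left _ _).trans (min_le_right _ _)
      have m2 : 2 * ρ ≤ y 0 + v 0 := by rw [hm]; exact (min_le_right _ _).trans (min_le_left _ _)
      have m3 : 2 * ρ ≤ y 1 + v 1 := by rw [hm]; exact (min_le_right _ _).trans (min_le_right _ _)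
      obtain ⟨C, hC, h⟩ := slice_bound α hG hA hρ0 (M := y 0 + y 1 + (y 0 + v 0) + (y 1 + v 1) + ρ) (by linarith)
      refine ⟨C, hC, fun s hs => ?_⟩
      obtain ⟨s0, s1⟩ := hs
      refine h (y + s • v) (fun i => ?_) (fun i => ?_)
      · fin_cases i
        · simp only [Pi.add_apply, Pi.smul_apply, smul_eq_mul, Fin.zero_eta]
          nlinarith
        · simp only [Pi.add_apply, Pi.smul_apply, smul_eq_mul, Fin.mk_one]
          nlinarith
      · fin_cases i
        · simp only [Pi.add_apply, Pi.smul_apply, smul_eq_mul, Fin.zero_eta]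
          nlinarith
        · simp only [Pi.add_apply, Pi.smul_apply, smul_eq_mul, Fin.mk_one]
          nlinarith)
  refine ⟨g, gm.measurable, ?_, fun a b ha hb => gF ![a, b] ⟨ha, hb⟩⟩
  rw [← tonelli_berg α gm.measurable, berg_eq α hG.continuousOn]
  refine setLIntegral_mono_ae' isOpen_Q2.measurableSet (Eventually.of_forall fun y hy => ?_)
  exact mul_le_mul' le_rfl (gb y hy)

/-- support of the extended density -/
def D3 : Set (Fin 3 → ℝ) := {t | 0 < t 0 ∧ 0 < t 1 ∧ |t 2| ≤ √(t 0 * t 1)}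

theorem measurableSet_D3 : MeasurableSet D3 := by
  refine (measurableSet_lt measurable_const (measurable_pi_apply 0)).inter
    ((measurableSet_lt measurable_const (measurable_pi_apply 1)).inter ?_)
  have h1 : Continuous fun t : Fin 3 → ℝ => |t 2| := by fun_prop
  have h2 : Continuous fun t : Fin 3 → ℝ => √(t 0 * t 1) := by fun_prop
  exact measurableSet_le h1.measurable h2.measurable

/-- extension kernel -/
def kk (m : ℕ) : (Fin 3 → ℝ) → ℝ := D3.indicator fun t => ((PP t) ^ m * (2 * √(t 0 * t 1)))⁻¹

theorem measurable_kk (m : ℕ) : Measurable (kk m) := by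
  refine Measurable.indicator ?_ measurableSet_D3
  have : Continuous fun t : Fin 3 → ℝ => (PP t) ^ m * (2 * √(t 0 * t 1)) := by
    have := continuous_PP
    fun_prop
  exact this.measurable.inv

theorem jn_mem_D3 {s : Fin 2 → ℝ} {r : ℝ} : jn s r ∈ D3 ↔ s ∈ Q2 ∧ r ∈ Icc (-√(s 0 * s 1)) (√(s 0 * s 1)) := by
  simp only [D3, Q2, jn, mem_ofPred_eq, Matrix.cons_val, mem_Icc, abs_le]
  tauto

theorem PP_ge {s : Fin 2 → ℝ} {r : ℝ} (h : jn s r ∈ D3) : 12 * Real.pi ^ 2 * (s 0 * s 1) ≤ PP (jn s r) := by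
  obtain ⟨h0, h1, h2⟩ := h
  simp only [jn, Matrix.cons_val] at h0 h1 h2
  have : r ^ 2 ≤ s 0 * s 1 := by
    have := sq_le_sq' (by linarith [abs_le.1 h2, (abs_le.1 h2).1]) (abs_le.1 h2).2
    rwa [Real.sq_sqrt (by positivity)] at this
  simp only [PP, jn, Matrix.cons_val]
  have : 0 ≤ Real.pi ^ 2 * (s 0 * s 1 - r ^ 2) := mul_nonneg (by positivity) (by linarith)
  nlinarith

theorem kk_integral (m : ℕ) (s : Fin 2 → ℝ) (w : ℂ) (hw : s ∉ Q2 → w = 0) :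
    ∫ r : ℝ, (PP (jn s r) : ℂ) ^ m * ((kk m (jn s r) : ℂ) * w) = w := by
  by_cases hs : s ∈ Q2
  · have hq : 0 < s 0 * s 1 := mul_pos hs.1 hs.2
    have e : ∀ r : ℝ, (PP (jn s r) : ℂ) ^ m * ((kk m (jn s r) : ℂ) * w) =
        (Icc (-√(s 0 * s 1)) (√(s 0 * s 1))).indicator (fun _ => ((2 * √(s 0 * s 1))⁻¹ : ℝ) * w) r := by
      intro r
      by_cases hr : r ∈ Icc (-√(s 0 * s 1)) (√(s 0 * s 1))
      · have hm : jn s r ∈ D3 := jn_mem_D3.2 ⟨hs, hr⟩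
        have hP : 0 < PP (jn s r) := lt_of_lt_of_le (by positivity) (PP_ge hm)
        rw [indicator_of_mem hr, kk, indicator_of_mem hm, ← mul_assoc]
        congr 1
        rw [← Complex.ofReal_pow, ← Complex.ofReal_mul]
        congr 1
        simp only [jn, Matrix.cons_val] at hP ⊢
        field_simp
      · have hm : jn s r ∉ D3 := fun h => hr (jn_mem_D3.1 h).2
        rw [indicator_of_notMem hr, kk, indicator_of_notMem hm]; simp
    simp only [e]
    rw [integral_indicator measurableSet_Icc, setIntegral_const, Measure.real, Real.volume_Icc,
      ENNReal.toReal_ofReal (by have := Real.sqrt_nonneg (s 0 * s 1); linarith)]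
    rw [Complex.real_smul, ← mul_assoc, ← Complex.ofReal_mul]
    have : √(s 0 * s 1) ≠ 0 := by positivity
    have e2 : (√(s 0 * s 1) - -√(s 0 * s 1)) * (2 * √(s 0 * s 1))⁻¹ = 1 := by field_simp; ring
    rw [e2]; simp
  · simp [hw hs]

theorem kk_L2 (m : ℕ) : ∃ C : ℝ, 0 < C ∧ ∀ (s : Fin 2 → ℝ) (w : ℂ),
    ∫⁻ r : ℝ, ‖(kk m (jn s r) : ℂ) * w‖ₑ ^ 2 ≤ ENNReal.ofReal C * 
      (lw (2 * m - 1 / 2) (s 0) * lw (2 * m - 1 / 2) (s 1) * ‖w‖ₑ ^ 2) := by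
  obtain ⟨c, hc, hlw⟩ := lw_prod (berg_exp m)
  refine ⟨((12 * Real.pi ^ 2) ^ (2 * m) * 2 * c)⁻¹, by positivity, fun s w => ?_⟩
  by_cases hs : s ∈ Q2
  · have hq : 0 < s 0 * s 1 := mul_pos hs.1 hs.2
    rw [hlw s hs.1 hs.2, rpow_split hq]
    have e : ∀ r : ℝ, ‖(kk m (jn s r) : ℂ) * w‖ₑ ^ 2 ≤ 
        (Icc (-√(s 0 * s 1)) (√(s 0 * s 1))).indicator (fun _ => ENNReal.ofReal (((12 * Real.pi ^ 2 * (s 0 * s 1)) ^ m * (2 * √(s 0 * s 1)))⁻¹ ^ 2) * ‖w‖ₑ ^ 2) r := by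
      intro r
      by_cases hr : r ∈ Icc (-√(s 0 * s 1)) (√(s 0 * s 1))
      · have hm : jn s r ∈ D3 := jn_mem_D3.2 ⟨hs, hr⟩
        have hge := PP_ge hm
        have hP : 0 < PP (jn s r) := lt_of_lt_of_le (by positivity) hge
        rw [indicator_of_mem hr, kk, indicator_of_mem hm, enorm_mul, mul_pow]
        refine mul_le_mul' ?_ le_rfl
        rw [← ofReal_norm, Complex.norm_real, Real.norm_eq_abs, abs_of_nonneg (by positivity), ← ENNReal.ofReal_pow (by positivity)]
        apply ENNReal.ofReal_le_ofReal
        have e0 : jn s r 0 = s 0 := rfl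
        have e1 : jn s r 1 = s 1 := rfl
        rw [e0, e1]
        gcongr
      · have hm : jn s r ∉ D3 := fun h => hr (jn_mem_D3.1 h).2
        rw [indicator_of_notMem hr, kk, indicator_of_notMem hm]; simp
    refine (lintegral_mono e).trans ?_
    rw [lintegral_indicator measurableSet_Icc, setLIntegral_const, Real.volume_Icc]
    rw [mul_right_comm, ← ENNReal.ofReal_mul (by positivity), ← mul_assoc (ENNReal.ofReal _) (ENNReal.ofReal _) (‖w‖ₑ ^ 2),
      ← ENNReal.ofReal_mul (by positivity)]
    refine le_of_eq ?_
    congr 2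
    generalize s 0 * s 1 = q at hq
    have h1 : √q ≠ 0 := by positivity
    have h2 : q = √q ^ 2 := (Real.sq_sqrt hq.le).symm
    rw [mul_pow (12 * Real.pi ^ 2) q, pow_mul' q 2 m, pow_mul' (12 * Real.pi ^ 2) 2 m]
    field_simp
    ring
  · have e : ∀ r : ℝ, ‖(kk m (jn s r) : ℂ) * w‖ₑ ^ 2 = 0 := by
      intro r
      have hm : jn s r ∉ D3 := fun h => hs (jn_mem_D3.1 h).1
      rw [kk, indicator_of_notMem hm]; simp
    simp only [e, lintegral_zero]
    exact bot_le

theorem rdot_nonneg_D3 {y t : Fin 3 → ℝ} (hy : y ∈ Sigma3) (ht : t ∈ D3) : 0 ≤ rdot y t := by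
  obtain ⟨h0, h1, h2⟩ := ht
  obtain ⟨k0, k1⟩ := hy
  have k2 : 0 < y 1 := by nlinarith [sq_nonneg (y 2)]
  have ht2 : t 2 ^ 2 ≤ t 0 * t 1 := by
    have := sq_le_sq' (by linarith [(abs_le.1 h2).1]) (abs_le.1 h2).2
    rwa [Real.sq_sqrt (by positivity)] at this
  rw [rdot3]
  have a0 : 0 < y 0 * t 0 := by positivity
  have a1 : 0 < y 1 * t 1 := by positivity
  have : (y 2 * t 2) ^ 2 ≤ (y 0 * t 0 + y 1 * t 1) ^ 2 := by
    have : (y 2 * t 2) ^ 2 ≤ (y 0 * y 1) * (t 0 * t 1) := by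
      rw [mul_pow]; exact mul_le_mul (by linarith) ht2 (sq_nonneg _) (by positivity)
    nlinarith
  have := (abs_le.1 (abs_le_of_sq_le_sq this (by positivity))).1
  linarith

theorem bwd (m : ℕ) : ∃ C : ℝ, 0 < C ∧ ∀ G : ℂ × ℂ → ℂ, DifferentiableOn ℂ G (UHP ×ˢ UHP) →
    bergNormSqProd (2 * m - 1 / 2) (2 * m - 1 / 2) G < ⊤ → 
    ∃ F : (Fin 3 → ℂ) → ℂ, DifferentiableOn ℂ F TSigma ∧ 
      hardyNormSqSigma F ≤ ENNReal.ofReal C * bergNormSqProd (2 * m - 1 / 2) (2 * m - 1 / 2) G ∧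
      EqOn (fun p : ℂ × ℂ => BoxS^[m] F ![p.1, p.2, 0]) G (UHP ×ˢ UHP) := by
  obtain ⟨C, hC, hL2⟩ := kk_L2 m
  refine ⟨C, hC, fun G hG hA => ?_⟩
  set α : ℝ := 2 * m - 1 / 2 with hα
  obtain ⟨g, gm, gb, gF⟩ := berg_PW hG hA
  set f : (Fin 3 → ℝ) → ℂ := fun t => (kk m t : ℂ) * g ![t 0, t 1] with hf
  have hjn : ∀ s r, f (jn s r) = (kk m (jn s r) : ℂ) * g s := by
    intro s r
    have : (![jn s r 0, jn s r 1] : Fin 2 → ℝ) = s := by ext i; fin_cases i <;> rfl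
    rw [hf]; simp only [this]
  have fm : Measurable f := by
    have h2 : Continuous fun t : Fin 3 → ℝ => (![t 0, t 1] : Fin 2 → ℝ) := by
      refine continuous_pi fun i => ?_
      fin_cases i
      · exact continuous_apply 0
      · exact continuous_apply 1
    exact (Complex.measurable_ofReal.comp (measurable_kk m)).mul (gm.comp h2.measurable)
  have fb : ∫⁻ t, ‖f t‖ₑ ^ 2 ≤ ENNReal.ofReal C * bergNormSqProd α α G := by
    rw [lintegral_fin3 (fm.enorm.pow_const 2)]
    calc _ ≤ ∫⁻ s : Fin 2 → ℝ, ENNReal.ofReal C * (lw α (s 0) * lw α (s 1) * ‖g s‖ₑ ^ 2) := by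
          refine lintegral_mono fun s => ?_
          simp only [hjn]
          exact hL2 s (g s)
      _ = ENNReal.ofReal C * ∫⁻ s : Fin 2 → ℝ, lw α (s 0) * lw α (s 1) * ‖g s‖ₑ ^ 2 :=
          lintegral_const_mul' _ _ ENNReal.ofReal_ne_top
      _ ≤ _ := mul_le_mul' le_rfl gb
  have ffin : ENNReal.ofReal C * bergNormSqProd α α G < ⊤ := ENNReal.mul_lt_top ENNReal.ofReal_lt_top hA
  have fw : ∀ y ∈ Sigma3, ∫⁻ t, (ENNReal.ofReal (wt y t) * ‖f t‖ₑ) ^ 2 ≤ ENNReal.ofReal C * bergNormSqProd α α G := by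
    intro y hy
    refine le_trans (lintegral_mono fun t => ?_) fb
    by_cases ht : t ∈ D3
    · have hw : wt y t ≤ 1 := by
        unfold wt
        rw [Real.exp_le_one_iff]
        have := mul_nonneg Real.pi_pos.le (rdot_nonneg_D3 hy ht)
        linarith
      gcongr
      calc _ ≤ 1 * ‖f t‖ₑ := by gcongr; exact ENNReal.ofReal_le_one.2 hw
        _ = _ := one_mul _
    · have : f t = 0 := by simp only [hf]; rw [kk, indicator_of_notMem ht]; simp
      simp [this]
  have hadm : Adm Sigma3 f := ⟨fm.aestronglyMeasurable, fun y hy =>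
    integrable_of_L2 isOpen_Sigma3 fm.aestronglyMeasurable (fun y hy => (fw y hy).trans_lt ffin) hy⟩
  -- vanishing of g off the quadrant
  have g0 : ∀ᵐ s : Fin 2 → ℝ, s ∉ Q2 → g s = 0 := by
    have hlm : Measurable fun s : Fin 2 → ℝ => lw α (s 0) * lw α (s 1) * ‖g s‖ₑ ^ 2 :=
      (((lw_meas α).comp (measurable_pi_apply 0)).mul ((lw_meas α).comp (measurable_pi_apply 1))).mul (gm.enorm.pow_const 2)
    have hpos : ∀ r, lw α r ≠ 0 := by
      intro r
      rcases le_or_gt r 0 with h | h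
      · rw [lw_neg α h]; simp
      · obtain ⟨c, hc, h'⟩ := lw_pos (berg_exp m)
        rw [h' r h]
        simp; positivity
    filter_upwards [ae_lt_top hlm (gb.trans_lt hA).ne] with s hs hsQ
    by_contra hg
    have hg2 : ‖g s‖ₑ ^ 2 ≠ 0 := by simpa using hg
    have : lw α (s 0) * lw α (s 1) = ⊤ := by
      by_cases h0 : 0 < s 0
      · have h1 : s 1 ≤ 0 := by
          by_contra h1
          exact hsQ ⟨h0, not_le.1 h1⟩
        rw [lw_neg α h1, ENNReal.mul_top (hpos _)]
      · rw [lw_neg α (not_lt.1 h0), ENNReal.top_mul (hpos _)]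
    rw [this, ENNReal.top_mul hg2] at hs
    exact lt_irrefl _ hs
  obtain ⟨hadm2, hbox⟩ := BoxS_iter hadm (fun z _ => rfl) m
  have hhm : Measurable fun t => (PP t : ℂ) ^ m * f t := by
    have : Continuous fun t : Fin 3 → ℝ => (PP t : ℂ) ^ m := by have := continuous_PP; fun_prop
    exact this.measurable.mul fm
  obtain ⟨-, -, hres⟩ := FLT_restrict hhm hadm2
  refine ⟨FLT f, fun z hz => ((hadm.FD isOpen_Sigma3 hz).1).differentiableWithinAt, ?_, ?_⟩
  · refine iSup₂_le fun y hy => ?_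
    have hp := plancherel_pos _ (hadm.2 y hy)
    refine le_trans (le_of_eq ?_) (hp.trans (le_trans (le_of_eq ?_) (fw y hy)))
    · refine lintegral_congr fun x => ?_
      rw [← FLT_cx]; rfl
    · refine lintegral_congr fun t => ?_
      rw [← enorm_eq_nnnorm, enorm_mul, ← ofReal_norm (wt y t : ℂ), Complex.norm_of_nonneg (wt_pos _ _).le]
  · intro p hp
    simp only
    rw [hbox (mem_TSigma_zero hp.1 hp.2), hres _ _ hp.1 hp.2]
    have := gF p.1 p.2 hp.1 hp.2
    rw [this]
    unfold FLT
    refine integral_congr_ae ?_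
    filter_upwards [g0] with s hs
    simp only [hjn]
    rw [kk_integral m s (g s) hs]

end PartH4

/-- for a positive measure `μ` on `Π⁺×Π⁺`, `μ(z₁,z₂) ⊗ δ₀(z₃)` is an
`m`-box Carleson measure for `H²(T_Σ)` iff `μ` is a Carleson measure for the
weighted Bergman space `A²_{(2m−1/2,2m−1/2)}(Π⁺×Π⁺)`. -/
theorem dirac_box_carleson_iff_bergman_prod_carleson (m : ℕ) (μ : Measure (ℂ × ℂ)) :
    (∃ C : ℝ, 0 < C ∧ ∀ F : (Fin 3 → ℂ) → ℂ,
        DifferentiableOn ℂ F TSigma → hardyNormSqSigma F < ⊤ →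
        (∫⁻ p in UHP ×ˢ UHP, (‖BoxS^[m] F ![p.1, p.2, 0]‖₊ : ℝ≥0∞) ^ 2 ∂μ)
          ≤ ENNReal.ofReal C * hardyNormSqSigma F)
    ↔ (∃ C' : ℝ, 0 < C' ∧ ∀ G : ℂ × ℂ → ℂ,
        DifferentiableOn ℂ G (UHP ×ˢ UHP) →
        bergNormSqProd (2 * m - 1 / 2) (2 * m - 1 / 2) G < ⊤ →
        (∫⁻ p in UHP ×ˢ UHP, (‖G p‖₊ : ℝ≥0∞) ^ 2 ∂μ)
          ≤ ENNReal.ofReal C' * bergNormSqProd (2 * m - 1 / 2) (2 * m - 1 / 2) G) := by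
  have hS : MeasurableSet (UHP ×ˢ UHP) := isOpen_UHP.measurableSet.prod isOpen_UHP.measurableSet
  constructor
  · rintro ⟨C, hC, h⟩
    obtain ⟨K, hK, hb⟩ := bwd m
    refine ⟨C * K, mul_pos hC hK, fun G hG hA => ?_⟩
    obtain ⟨F, hF, hFn, hFG⟩ := hb G hG hA
    have h1 := h F hF (hFn.trans_lt (ENNReal.mul_lt_top ENNReal.ofReal_lt_top hA))
    calc _ = ∫⁻ p in UHP ×ˢ UHP, (‖BoxS^[m] F ![p.1, p.2, 0]‖₊ : ℝ≥0∞) ^ 2 ∂μ := by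
          refine setLIntegral_congr_fun hS fun p hp => ?_
          have := hFG hp
          simp only at this
          simp only [this]
      _ ≤ _ := h1
      _ ≤ ENNReal.ofReal C * (ENNReal.ofReal K * bergNormSqProd (2 * m - 1 / 2) (2 * m - 1 / 2) G) := mul_le_mul' le_rfl hFn
      _ = _ := by rw [ENNReal.ofReal_mul hC.le, mul_assoc]
  · rintro ⟨C, hC, h⟩
    obtain ⟨K, hK, hb⟩ := fwd m
    refine ⟨C * K, mul_pos hC hK, fun F hF hA => ?_⟩
    obtain ⟨hd, hn⟩ := hb F hF hA
    have h1 := h _ hd (hn.trans_lt (ENNReal.mul_lt_top ENNReal.ofReal_lt_top hA))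
    refine h1.trans ((mul_le_mul' le_rfl hn).trans (le_of_eq ?_))
    rw [ENNReal.ofReal_mul hC.le, mul_assoc]
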